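/- arXiv:2507.11672 — 5 statements merged into one kernel-verified Lean document; each statement's English description precedes it below -/
import Mathlib

section
/- Let S be a nonempty finite set of integers, each at least 2, with 1 ≤ |S| ≤ 3, and assume that lcm(S) has at most two distinct prime factors. Then MIN(S) = FIB(S). -/
open Polynomial

/-- The mask polynomial of a finite set of natural numbers: `A(X) = ∑_{a ∈ A} X^a`. -/
noncomputable def maskPoly (A : Finset ℕ) : Polynomial ℤ := ∑ a ∈ A, X ^ a

/-- The fiber polynomial `F^N_p(X) = 1 + X^{N/p} + ⋯ + X^{(p-1)N/p}`. -/
noncomputable def fiberPoly (N p : ℕ) : Polynomial ℤ :=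
  ∑ j ∈ Finset.range p, X ^ (j * (N / p))

/-- A finite set `A ⊆ ℕ` is fibered on scale `N` if some prime `p ∣ N` has
`F^N_p(X) ∣ A(X)`. -/
def IsFibered (A : Finset ℕ) (N : ℕ) : Prop :=
  ∃ p : ℕ, p.Prime ∧ p ∣ N ∧ fiberPoly N p ∣ maskPoly A

/-- `MIN(S)`: the minimal size of a nonempty finite `A ⊆ ℕ` with `Φ_s ∣ A(X)` for all `s ∈ S`. -/
noncomputable def MINs (S : Finset ℕ) : ℕ :=
  sInf {k | ∃ A : Finset ℕ, A.Nonempty ∧ A.card = k ∧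
    ∀ s ∈ S, cyclotomic s ℤ ∣ maskPoly A}

/-- `FIB(S)`: the minimal size of a nonempty finite `A ⊆ ℕ` fibered on each scale `s ∈ S`. -/
noncomputable def FIBs (S : Finset ℕ) : ℕ :=
  sInf {k | ∃ A : Finset ℕ, A.Nonempty ∧ A.card = k ∧ ∀ s ∈ S, IsFibered A s}


/-- counting elements of `A` in a residue class -/
def cn (A : Finset ℕ) (m x : ℕ) : ℕ := (A.filter (fun n => n ≡ x [MOD m])).card

/-- counting elements of `A` in a pair of residue classes -/
def cc (A : Finset ℕ) (m n x y : ℕ) : ℕ :=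
  (A.filter (fun k => k ≡ x [MOD m] ∧ k ≡ y [MOD n])).card

lemma exists_digit {d p x x' : ℕ} (hd : 0 < d) (hp : 0 < p) (h : x' ≡ x [MOD d]) :
    ∃ i < p, x' ≡ x + i * d [MOD (d * p)] := by
  have h1 : x ≡ x' + d * p * x [MOD d] := by
    have : x' + d * p * x ≡ x' [MOD d] := by
      rw [mul_assoc]; simp [Nat.ModEq]
    exact (this.trans h).symm
  have hle : x ≤ x' + d * p * x := by
    have : 0 < d * p := Nat.mul_pos hd hp
    nlinarith
  obtain ⟨t, ht⟩ := (Nat.modEq_iff_dvd' hle).1 h1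
  have e : x' + d * p * x = x + t * d := by rw [mul_comm t]; omega
  refine ⟨t % p, Nat.mod_lt _ hp, ?_⟩
  have h2 : x' ≡ x' + d * p * x [MOD d * p] := by simp [Nat.ModEq]
  refine h2.trans ?_
  rw [e]
  refine Nat.ModEq.add_left _ ?_
  rw [mul_comm t, mul_comm _ d]
  exact Nat.ModEq.mul_left' d (Nat.mod_modEq t p).symm

lemma digit_unique {d p x i j : ℕ} (hd : 0 < d) (hi : i < p) (hj : j < p)
    (h : x + i * d ≡ x + j * d [MOD (d * p)]) : i = j := by
  have h1 : i * d ≡ j * d [MOD (d * p)] := Nat.ModEq.add_left_cancel' _ h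
  rw [mul_comm d p] at h1
  have := Nat.ModEq.mul_right_cancel' hd.ne' h1
  exact Nat.ModEq.eq_of_lt_of_lt this hi hj

lemma cn_split (A : Finset ℕ) {d p : ℕ} (hd : 0 < d) (hp : 0 < p) (x : ℕ) :
    cn A d x = ∑ i ∈ Finset.range p, cn A (d * p) (x + i * d) := by
  unfold cn
  rw [← Finset.card_biUnion]
  · congr 1
    ext n
    simp only [Finset.mem_filter, Finset.mem_biUnion, Finset.mem_range]
    constructor
    · rintro ⟨h1, h2⟩
      obtain ⟨i, hi, h⟩ := exists_digit hd hp h2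
      exact ⟨i, hi, h1, h⟩
    · rintro ⟨i, hi, h1, h⟩
      refine ⟨h1, (h.of_mul_right p).trans ?_⟩
      simp [Nat.ModEq]
  · intro i hi j hj hij
    rw [Function.onFun, Finset.disjoint_left]
    intro n h1 h2
    simp only [Finset.mem_filter] at h1 h2
    exact hij (digit_unique hd (by simpa using hi) (by simpa using hj) (h1.2.symm.trans h2.2))

lemma cn_one (A : Finset ℕ) (x : ℕ) : cn A 1 x = A.card := by
  simp [cn, Nat.modEq_one]

lemma cn_total (A : Finset ℕ) {p : ℕ} (hp : 0 < p) :
    A.card = ∑ i ∈ Finset.range p, cn A p i := by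
  have := cn_split A (d := 1) one_pos hp 0
  rw [cn_one] at this
  simpa using this

lemma cn_congr (A : Finset ℕ) {m x x' : ℕ} (h : x ≡ x' [MOD m]) : cn A m x = cn A m x' := by
  unfold cn; congr 1; ext n
  simp only [Finset.mem_filter]
  exact and_congr_right fun _ => ⟨fun k => k.trans h, fun k => k.trans h.symm⟩

lemma cc_congr (A : Finset ℕ) {m n x x' y y' : ℕ} (h : x ≡ x' [MOD m]) (h' : y ≡ y' [MOD n]) :
    cc A m n x y = cc A m n x' y' := by
  unfold cc; congr 1; ext k
  simp only [Finset.mem_filter]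
  exact and_congr_right fun _ => and_congr ⟨fun k => k.trans h, fun k => k.trans h.symm⟩
    ⟨fun k => k.trans h', fun k => k.trans h'.symm⟩

lemma cc_swap (A : Finset ℕ) (m n x y : ℕ) : cc A m n x y = cc A n m y x := by
  unfold cc; simp only [and_comm]

lemma cc_eq_cn (A : Finset ℕ) (m n x y : ℕ) :
    cc A m n x y = cn (A.filter (fun k => k ≡ y [MOD n])) m x := by
  unfold cc cn; rw [Finset.filter_filter]; simp only [and_comm]

lemma cc_split_left (A : Finset ℕ) {d p : ℕ} (hd : 0 < d) (hp : 0 < p) (n x y : ℕ) :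
    cc A d n x y = ∑ i ∈ Finset.range p, cc A (d * p) n (x + i * d) y := by
  simp only [cc_eq_cn]; exact cn_split _ hd hp x

lemma cc_split_right (A : Finset ℕ) {d p : ℕ} (hd : 0 < d) (hp : 0 < p) (m x y : ℕ) :
    cc A m d x y = ∑ i ∈ Finset.range p, cc A m (d * p) x (y + i * d) := by
  simp only [cc_swap A m]; exact cc_split_left A hd hp _ _ _

lemma cc_one_right (A : Finset ℕ) (m x y : ℕ) : cc A m 1 x y = cn A m x := by
  simp [cc, cn, Nat.modEq_one]

lemma cc_one_left (A : Finset ℕ) (m x y : ℕ) : cc A 1 m x y = cn A m y := by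
  simp [cc, cn, Nat.modEq_one]

lemma cn_sum_right (A : Finset ℕ) {m n : ℕ} (hn : 0 < n) (x : ℕ) :
    cn A m x = ∑ y ∈ Finset.range n, cc A m n x y := by
  have := cc_split_right A (d := 1) one_pos hn m x 0
  rw [cc_one_right] at this
  simpa using this

lemma cn_sum_left (A : Finset ℕ) {m n : ℕ} (hm : 0 < m) (y : ℕ) :
    cn A n y = ∑ x ∈ Finset.range m, cc A m n x y := by
  have := cc_split_left A (d := 1) one_pos hm n 0 y
  rw [cc_one_left] at this
  simpa using this

/-- exchange condition, moduli `M * p`, `L * q` -/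
def Exch (A : Finset ℕ) (p q M L : ℕ) : Prop :=
  ∀ x x' y y', x ≡ x' [MOD M] → y ≡ y' [MOD L] →
    cc A (M * p) (L * q) x y + cc A (M * p) (L * q) x' y'
      = cc A (M * p) (L * q) x y' + cc A (M * p) (L * q) x' y

/-- fibered in the `p` direction: moduli `M * p`, `n` -/
def PF (A : Finset ℕ) (p M n : ℕ) : Prop :=
  ∀ x x' y, x ≡ x' [MOD M] → cc A (M * p) n x y = cc A (M * p) n x' y

lemma PF.coarse {A : Finset ℕ} {p M n : ℕ} (h : PF A p M n) (hn : 0 < n) : PF A p M 1 := by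
  intro x x' y hx
  rw [cc_one_right, cc_one_right, cn_sum_right A hn, cn_sum_right A hn]
  exact Finset.sum_congr rfl fun y _ => h x x' y hx

lemma PF.cn {A : Finset ℕ} {p M n : ℕ} (h : PF A p M n) (hn : 0 < n) {x x' : ℕ}
    (hx : x ≡ x' [MOD M]) : cn A (M * p) x = cn A (M * p) x' := by
  have := h.coarse hn x x' 0 hx
  simpa only [cc_one_right] using this

lemma Exch.swap {A : Finset ℕ} {p q M L : ℕ} (h : Exch A p q M L) : Exch A q p L M := by
  intro x x' y y' hx hy
  have := h y y' x x' hy hx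
  simp only [cc_swap A (L * q)]
  omega

/-- divisibility from fibering at several levels -/
lemma dvd_of_levels (A : Finset ℕ) {p : ℕ} (hp : 0 < p) (E : Finset ℕ)  :
    (∀ e ∈ E, 1 ≤ e ∧ PF A p (p ^ (e - 1)) 1) →
    ∀ k, (∀ e ∈ E, k < e) → ∀ x, p ^ E.card ∣ cn A (p ^ k) x := by
  induction E using Finset.induction_on_min with
  | empty => intro _ k _ x; simp
  | insert e E he ih =>
    intro h k hk x
    have hne : e ∉ E := fun h' => lt_irrefl _ (he e h')
    rw [Finset.card_insert_of_notMem hne]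
    obtain ⟨h1, hf⟩ := h e (Finset.mem_insert_self _ _)
    have ih' := ih (fun e' he' => h e' (Finset.mem_insert_of_mem he')) e he
    have key : ∀ z, p ^ (E.card + 1) ∣ cn A (p ^ (e - 1)) z := by
      intro z
      have hee : p ^ e = p ^ (e - 1) * p := by
        rw [← pow_succ]; congr 1; omega
      rw [cn_split A (pow_pos hp _) hp]
      have : ∀ i ∈ Finset.range p, cn A (p ^ (e - 1) * p) (z + i * p ^ (e - 1))
          = cn A (p ^ (e - 1) * p) z := by
        intro i _
        exact hf.cn one_pos (by simp [Nat.ModEq])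
      rw [Finset.sum_congr rfl this, Finset.sum_const, Finset.card_range, smul_eq_mul, pow_succ,
        mul_comm]
      apply Nat.mul_dvd_mul_left
      rw [← hee]; exact ih' z
    have hke := hk e (Finset.mem_insert_self _ _)
    have hkk : p ^ (e - 1) = p ^ k * p ^ (e - 1 - k) := by
      rw [← pow_add]; congr 1; omega
    rw [cn_split A (pow_pos hp k) (pow_pos hp (e - 1 - k)), ← hkk]
    exact Finset.dvd_sum fun i _ => key _

lemma exch_decomp {f : ℕ → ℕ → ℕ} {p q : ℕ} (hp : 0 < p) (hq : 0 < q)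
    (h : ∀ i < p, ∀ i' < p, ∀ j < q, ∀ j' < q, f i j + f i' j' = f i j' + f i' j) :
    ∃ u v : ℕ → ℕ, ∀ i < p, ∀ j < q, f i j = u j + v i := by
  obtain ⟨j0, hj0, hmin⟩ := Finset.exists_min_image (Finset.range q) (fun j => f 0 j) ⟨0, by simpa⟩
  refine ⟨fun j => f 0 j - f 0 j0, fun i => f i j0, fun i hi j hj => ?_⟩
  have h1 := h i hi 0 hp j hj j0 (by simpa using hj0)
  have h2 := hmin j (by simpa using hj)
  simp only at h2 ⊢
  omega

/-- Lam-Leung type decomposition on one grid -/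
lemma grid_decomp {A : Finset ℕ} {p q M L : ℕ} (hp : 0 < p) (hq : 0 < q) (hM : 0 < M) (hL : 0 < L)
    (h : Exch A p q M L) (x y : ℕ) :
    ∃ U V : ℕ, cc A M L x y = p * U + q * V ∧ (U = 0 → ∀ x' y' y'', x' ≡ x [MOD M] →
      y' ≡ y [MOD L] → y'' ≡ y [MOD L] →
      cc A (M * p) (L * q) x' y' = cc A (M * p) (L * q) x' y'') := by
  obtain ⟨u, v, huv⟩ := exch_decomp (f := fun i j => cc A (M * p) (L * q) (x + i * M) (y + j * L))
    hp hq (by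
      intro i _ i' _ j _ j' _
      exact h _ _ _ _ (by simp [Nat.ModEq]) (by simp [Nat.ModEq]))
  refine ⟨∑ j ∈ Finset.range q, u j, ∑ i ∈ Finset.range p, v i, ?_, ?_⟩
  · rw [cc_split_left A hM hp]
    have : ∀ i ∈ Finset.range p, cc A (M * p) L (x + i * M) y =
        ∑ j ∈ Finset.range q, u j + q * v i := by
      intro i hi
      rw [cc_split_right A hL hq, Finset.sum_congr rfl (g := fun j => u j + v i),
        Finset.sum_add_distrib]
      · simp
      · intro j hj; exact huv i (by simpa using hi) j (by simpa using hj)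
    rw [Finset.sum_congr rfl this, Finset.sum_add_distrib, ← Finset.mul_sum]
    simp
  · intro hU x' y' y'' hx hy hy'
    rw [Finset.sum_eq_zero_iff] at hU
    obtain ⟨i, hi, ei⟩ := exists_digit hM hp hx
    obtain ⟨j, hj, ej⟩ := exists_digit hL hq hy
    obtain ⟨j', hj', ej'⟩ := exists_digit hL hq hy'
    rw [cc_congr A ei ej, cc_congr A ei ej']
    have h1 := huv i hi j hj
    have h2 := huv i hi j' hj'
    rw [hU j (by simpa using hj)] at h1
    rw [hU j' (by simpa using hj')] at h2
    rw [h1, h2]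

lemma LL {A : Finset ℕ} {p q M L : ℕ} (hp : 0 < p) (hq : 0 < q) (hM : 0 < M) (hL : 0 < L)
    (h : Exch A p q M L) :
    ∃ U V : ℕ, A.card = p * U + q * V ∧ (U = 0 → ∀ x y y', y ≡ y' [MOD L] →
      cc A (M * p) (L * q) x y = cc A (M * p) (L * q) x y') := by
  choose U V h1 h2 using grid_decomp hp hq hM hL h
  refine ⟨∑ x ∈ Finset.range M, ∑ y ∈ Finset.range L, U x y,
    ∑ x ∈ Finset.range M, ∑ y ∈ Finset.range L, V x y, ?_, ?_⟩
  · rw [cn_total A hM]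
    simp only [Finset.mul_sum, ← Finset.sum_add_distrib]
    refine Finset.sum_congr rfl fun x _ => ?_
    rw [cn_sum_right A hL]
    exact Finset.sum_congr rfl fun y _ => h1 x y
  · intro hU x y y' hy
    simp only [Finset.sum_eq_zero_iff, Finset.mem_range] at hU
    exact h2 (x % M) (y % L) (hU _ (Nat.mod_lt _ hM) _ (Nat.mod_lt _ hL)) x y y'
      (Nat.mod_modEq _ _).symm (Nat.mod_modEq _ _).symm (hy.symm.trans (Nat.mod_modEq _ _).symm)

lemma num_core {p q : ℕ} (hp : 0 < p) (hq : 0 < q) (hpq : p.Coprime q) (u v : ℕ → ℕ)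
    (h1 : ∀ i < p, p ∣ ∑ j ∈ Finset.range q, u j + q * v i)
    (h2 : ∀ j < q, q ∣ ∑ i ∈ Finset.range p, v i + p * u j)
    (hpos : 0 < p * ∑ j ∈ Finset.range q, u j + q * ∑ i ∈ Finset.range p, v i) :
    p * q * min p q ≤ p * ∑ j ∈ Finset.range q, u j + q * ∑ i ∈ Finset.range p, v i := by
  have aux : ∀ {p q : ℕ}, 0 < p → p.Coprime q → ∀ (c : ℕ) (v : ℕ → ℕ),
      (∀ i < p, p ∣ c + q * v i) → ∃ V', ∑ i ∈ Finset.range p, v i = p * V' ∧ v 0 % p ≤ V' := by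
    intro p q hp hpq c v h
    have hm : ∀ i < p, v i % p = v 0 % p := by
      intro i hi
      have : c + q * v i ≡ c + q * v 0 [MOD p] :=
        ((Nat.modEq_zero_iff_dvd.2 (h i hi))).trans (Nat.modEq_zero_iff_dvd.2 (h 0 hp)).symm
      have := Nat.ModEq.add_left_cancel' _ this
      exact Nat.ModEq.cancel_left_of_coprime hpq this
    refine ⟨v 0 % p + ∑ i ∈ Finset.range p, v i / p, ?_, by omega⟩
    have : ∀ i ∈ Finset.range p, v i = v 0 % p + p * (v i / p) := by
      intro i hi
      rw [← hm i (by simpa using hi)]; exact (Nat.mod_add_div _ _).symm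
    rw [Finset.sum_congr rfl this, Finset.sum_add_distrib, ← Finset.mul_sum]
    simp [mul_add]
  obtain ⟨V, hV, hv⟩ := aux hp hpq _ v h1
  obtain ⟨U, hU, hu⟩ := aux hq hpq.symm _ u h2
  have a1 := h1 0 hp
  have a2 := h2 0 hq
  rw [hU, ← mul_add] at a1
  rw [hV, ← mul_add] at a2
  have a1' : p ∣ U + v 0 := hpq.dvd_of_dvd_mul_left a1
  have a2' : q ∣ V + u 0 := hpq.symm.dvd_of_dvd_mul_left a2
  have b1 : p ∣ U + v 0 % p := by
    rw [← Nat.mod_add_div (v 0) p, ← add_assoc] at a1'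
    exact (Nat.dvd_add_left (Nat.dvd_mul_right _ _)).1 a1'
  have b2 : q ∣ V + u 0 % q := by
    rw [← Nat.mod_add_div (u 0) q, ← add_assoc] at a2'
    exact (Nat.dvd_add_left (Nat.dvd_mul_right _ _)).1 a2'
  rw [hU, hV] at hpos ⊢
  have e : p * (q * U) + q * (p * V) = p * q * (U + V) := by ring
  rw [e] at hpos ⊢
  apply Nat.mul_le_mul_left
  have hUV : 0 < U + V := Nat.pos_of_mul_pos_left hpos
  rcases Nat.eq_zero_or_pos (U + v 0 % p) with h | h
  · rcases Nat.eq_zero_or_pos (V + u 0 % q) with h' | h'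
    · omega
    · have := Nat.le_of_dvd h' b2
      have := min_le_right p q
      omega
  · have := Nat.le_of_dvd h b1
    have := min_le_left p q
    omega

lemma cc_slice_of {A : Finset ℕ} {m M n x y r : ℕ} (hm : m ∣ M) (h : x ≡ r [MOD m]) :
    cc (A.filter (fun k => k ≡ r [MOD m])) M n x y = cc A M n x y := by
  unfold cc; rw [Finset.filter_filter]; congr 1; ext k
  simp only [Finset.mem_filter]
  constructor
  · rintro ⟨h1, h2, h3⟩; exact ⟨h1, h3⟩
  · rintro ⟨h1, h2, h3⟩; exact ⟨h1, (h2.of_dvd hm).trans h, h2, h3⟩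

lemma cc_slice_not {A : Finset ℕ} {m M n x y r : ℕ} (hm : m ∣ M) (h : ¬ x ≡ r [MOD m]) :
    cc (A.filter (fun k => k ≡ r [MOD m])) M n x y = 0 := by
  unfold cc; rw [Finset.filter_filter, Finset.card_eq_zero, Finset.filter_eq_empty_iff]
  rintro k _ ⟨h1, h2, h3⟩
  exact h ((h2.of_dvd hm).symm.trans h1)

lemma Exch.slice {A : Finset ℕ} {p q M L m : ℕ} (h : Exch A p q M L) (hm : m ∣ M) (r : ℕ) :
    Exch (A.filter (fun k => k ≡ r [MOD m])) p q M L := by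
  intro x x' y y' hx hy
  have hm' : m ∣ M * p := hm.mul_right p
  by_cases hr : x ≡ r [MOD m]
  · have hr' : x' ≡ r [MOD m] := (hx.of_dvd hm).symm.trans hr
    simp only [cc_slice_of hm' hr, cc_slice_of hm' hr']
    exact h x x' y y' hx hy
  · have hr' : ¬ x' ≡ r [MOD m] := fun h' => hr ((hx.of_dvd hm).trans h')
    simp only [cc_slice_not hm' hr, cc_slice_not hm' hr']

lemma PF.slice {A : Finset ℕ} {p M m n : ℕ} (h : PF A p M n) (hm : m ∣ M) (r : ℕ) :
    PF (A.filter (fun k => k ≡ r [MOD m])) p M n := by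
  intro x x' y hx
  have hm' : m ∣ M * p := hm.mul_right p
  by_cases hr : x ≡ r [MOD m]
  · have hr' : x' ≡ r [MOD m] := (hx.of_dvd hm).symm.trans hr
    simp only [cc_slice_of hm' hr, cc_slice_of hm' hr']
    exact h x x' y hx
  · have hr' : ¬ x' ≡ r [MOD m] := fun h' => hr ((hx.of_dvd hm).trans h')
    simp only [cc_slice_not hm' hr, cc_slice_not hm' hr']

lemma pow_pred_mul {p e : ℕ} (h : 1 ≤ e) : p ^ (e - 1) * p = p ^ e := by
  rw [← pow_succ]; congr 1; omega

/-- two-prime divisibility -/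
lemma dvd_of_levels2 (A : Finset ℕ) {p q : ℕ} (hp : 0 < p) (hq : 0 < q) (hpq : p.Coprime q)
    (E F : Finset ℕ)
    (hE : ∀ e ∈ E, 1 ≤ e ∧ PF A p (p ^ (e - 1)) 1)
    (hF : ∀ e ∈ F, 1 ≤ e ∧ PF A q (q ^ (e - 1)) 1) : p ^ E.card * q ^ F.card ∣ A.card := by
  apply Nat.Coprime.mul_dvd_of_dvd_of_dvd (Nat.Coprime.pow _ _ hpq)
  · have := dvd_of_levels A hp E hE 0 (fun e he => (hE e he).1) 0
    rwa [pow_zero, cn_one] at this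
  · have := dvd_of_levels A hq F hF 0 (fun e he => (hF e he).1) 0
    rwa [pow_zero, cn_one] at this

/-- core, case where the pure `p`-level is below the mixed one -/
lemma core_below {A : Finset ℕ} {p q a b c d : ℕ} (hp : 0 < p) (hq : 0 < q) (hpq : p.Coprime q)
    (hA : A.Nonempty) (hb : 1 ≤ b) (hc : 1 ≤ c) (hd : 1 ≤ d)
    (hP : PF A p (p ^ (c - 1)) 1) (hQ : PF A q (q ^ (d - 1)) 1)
    (h : Exch A p q (p ^ (a - 1)) (q ^ (b - 1))) (hca : c < a) (hdb : d ≠ b) :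
    p * q * min p q ≤ A.card := by
  have hdvd := dvd_of_levels2 A hp hq hpq {c} {d} (by simpa using ⟨hc, hP⟩) (by simpa using ⟨hd, hQ⟩)
  simp only [Finset.card_singleton, pow_one] at hdvd
  obtain ⟨k, hk⟩ := hdvd
  have hApos : 0 < A.card := hA.card_pos
  by_contra hlt
  have hkm : k < min p q := by
    rw [hk] at hlt
    by_contra h'
    exact hlt (Nat.mul_le_mul_left _ (not_lt.1 h'))
  have hkp : k < p := lt_of_lt_of_le hkm (min_le_left _ _)
  have hkq : k < q := lt_of_lt_of_le hkm (min_le_right _ _)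
  have hk0 : 0 < k := by
    rcases Nat.eq_zero_or_pos k with h0 | h0
    · rw [h0] at hk; omega
    · exact h0
  -- sum over representatives
  have hM := pow_pos hp (c - 1)
  have hsum : ∀ i, ∑ r ∈ Finset.range (p ^ (c - 1)), cn A (p ^ c) (r + i * p ^ (c - 1)) = q * k := by
    intro i
    have e1 : A.card = ∑ r ∈ Finset.range (p ^ (c - 1)), p * cn A (p ^ c) (r + i * p ^ (c - 1)) := by
      rw [cn_total A hM]
      refine Finset.sum_congr rfl fun r _ => ?_
      rw [cn_split A hM hp, pow_pred_mul hc]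
      rw [Finset.sum_congr rfl (g := fun _ => cn A (p ^ c) (r + i * p ^ (c - 1)))]
      · simp
      · intro j _
        rw [← pow_pred_mul (p := p) hc]
        exact hP.cn one_pos (by simp [Nat.ModEq])
    rw [← Finset.mul_sum] at e1
    apply Nat.eq_of_mul_eq_mul_left hp
    rw [← e1, hk, mul_assoc]
  have hca' : p ^ c ∣ p ^ (a - 1) := pow_dvd_pow _ (by omega)
  have hfib : PF A q (q ^ (b - 1)) (p ^ a) := by
    intro y y' x hy
    have := fun r => LL hp hq (pow_pos hp (a - 1)) (pow_pos hq (b - 1)) (h.slice hca' r)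
    choose U V h1 h2 using this
    set i := x / p ^ (c - 1) with hi
    have hs := hsum i
    have hs' : p * ∑ r ∈ Finset.range (p ^ (c - 1)), U (r + i * p ^ (c - 1)) +
        q * ∑ r ∈ Finset.range (p ^ (c - 1)), V (r + i * p ^ (c - 1)) = q * k := by
      rw [← hs, Finset.mul_sum, Finset.mul_sum, ← Finset.sum_add_distrib]
      exact Finset.sum_congr rfl fun r _ => (h1 _).symm
    have hq1 : q ∣ p * ∑ r ∈ Finset.range (p ^ (c - 1)), U (r + i * p ^ (c - 1)) := by
      have : q ∣ q * k := Nat.dvd_mul_right _ _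
      rw [← hs'] at this
      exact (Nat.dvd_add_left (Nat.dvd_mul_right _ _)).1 this
    obtain ⟨w, hw⟩ := hpq.symm.dvd_of_dvd_mul_left hq1
    have hU0 : ∑ r ∈ Finset.range (p ^ (c - 1)), U (r + i * p ^ (c - 1)) = 0 := by
      rw [hw] at hs' ⊢
      rcases Nat.eq_zero_or_pos w with h0 | h0
      · simp [h0]
      · exfalso
        have : q * k < q * p := Nat.mul_lt_mul_of_pos_left hkp hq
        have h5 : p * q * 1 ≤ p * q * w := Nat.mul_le_mul_left _ h0
        have h6 : p * (q * w) = p * q * w := by ring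
        have h7 : q * p = p * q := mul_comm _ _
        rw [h6] at hs'
        omega
    rw [Finset.sum_eq_zero_iff] at hU0
    have hx0 := hU0 (x % p ^ (c - 1)) (by simpa using Nat.mod_lt _ hM)
    have hxe : x % p ^ (c - 1) + i * p ^ (c - 1) = x := Nat.mod_add_div' _ _
    rw [hxe] at hx0
    have key := h2 x hx0 x y y' hy
    have hd1 : p ^ c ∣ p ^ (a - 1) * p := hca'.mul_right _
    rw [cc_slice_of hd1 rfl, cc_slice_of hd1 rfl, pow_pred_mul (by omega)] at key
    rw [cc_swap, cc_swap A _ _ y']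
    exact key
  have h3 := dvd_of_levels2 A hp hq hpq {c} {d, b} (by simpa using ⟨hc, hP⟩) (by
    intro e he
    simp only [Finset.mem_insert, Finset.mem_singleton] at he
    rcases he with rfl | rfl
    · exact ⟨hd, hQ⟩
    · exact ⟨hb, hfib.coarse (pow_pos hp _)⟩)
  rw [Finset.card_pair hdb, Finset.card_singleton] at h3
  have h4 := Nat.le_of_dvd hApos h3
  rw [hk] at h4
  have : p * q * k < p * q * q := Nat.mul_lt_mul_of_pos_left hkq (Nat.mul_pos hp hq)
  nlinarith

lemma core_above {A : Finset ℕ} {p q a b c d : ℕ} (hp : 0 < p) (hq : 0 < q) (hpq : p.Coprime q)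
    (hA : A.Nonempty) (ha : 1 ≤ a) (hb : 1 ≤ b)
    (hP : PF A p (p ^ (c - 1)) 1) (hQ : PF A q (q ^ (d - 1)) 1)
    (h : Exch A p q (p ^ (a - 1)) (q ^ (b - 1))) (hca : a < c) (hdb : b < d) :
    p * q * min p q ≤ A.card := by
  have hM := pow_pos hp (a - 1)
  have hL := pow_pos hq (b - 1)
  set M := p ^ (a - 1) with hMd
  set L := q ^ (b - 1) with hLd
  have dp : ∀ x, p ∣ cn A (M * p) x := by
    intro x
    have := dvd_of_levels A hp {c} (by simpa using ⟨by omega, hP⟩) a (by simpa using hca) x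
    rw [hMd, pow_pred_mul ha]; simpa using this
  have dq : ∀ x, q ∣ cn A (L * q) x := by
    intro x
    have := dvd_of_levels A hq {d} (by simpa using ⟨by omega, hQ⟩) b (by simpa using hdb) x
    rw [hLd, pow_pred_mul hb]; simpa using this
  set f : ℕ → ℕ → ℕ := fun i j => ∑ x ∈ Finset.range M, ∑ y ∈ Finset.range L,
    cc A (M * p) (L * q) (x + i * M) (y + j * L) with hf
  obtain ⟨u, v, huv⟩ := exch_decomp (f := f) hp hq (by
    intro i _ i' _ j _ j' _
    simp only [hf, ← Finset.sum_add_distrib]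
    refine Finset.sum_congr rfl fun x _ => Finset.sum_congr rfl fun y _ => ?_
    exact h _ _ _ _ (by simp [Nat.ModEq]) (by simp [Nat.ModEq]))
  have s1 : ∀ i, ∑ j ∈ Finset.range q, f i j = ∑ x ∈ Finset.range M, cn A (M * p) (x + i * M) := by
    intro i
    simp only [hf]
    rw [Finset.sum_comm]
    refine Finset.sum_congr rfl fun x _ => ?_
    rw [Finset.sum_comm, cn_sum_right A hL]
    exact Finset.sum_congr rfl fun y _ => (cc_split_right A hL hq _ _ _).symm
  have s2 : ∀ j, ∑ i ∈ Finset.range p, f i j = ∑ y ∈ Finset.range L, cn A (L * q) (y + j * L) := by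
    intro j
    simp only [hf]
    rw [Finset.sum_congr rfl (fun i _ => Finset.sum_comm), Finset.sum_comm]
    refine Finset.sum_congr rfl fun y _ => ?_
    rw [Finset.sum_comm, cn_sum_left A hM]
    exact Finset.sum_congr rfl fun y _ => (cc_split_left A hM hp _ _ _).symm
  have t1 : ∀ i < p, ∑ j ∈ Finset.range q, f i j = ∑ j ∈ Finset.range q, u j + q * v i := by
    intro i hi
    rw [Finset.sum_congr rfl (g := fun j => u j + v i), Finset.sum_add_distrib]
    · simp
    · intro j hj; exact huv i hi j (by simpa using hj)
  have t2 : ∀ j < q, ∑ i ∈ Finset.range p, f i j = ∑ i ∈ Finset.range p, v i + p * u j := by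
    intro j hj
    rw [Finset.sum_congr rfl (g := fun i => v i + u j), Finset.sum_add_distrib]
    · simp
    · intro i hi; rw [huv i (by simpa using hi) j hj, add_comm]
  have tot : A.card = p * ∑ j ∈ Finset.range q, u j + q * ∑ i ∈ Finset.range p, v i := by
    have : A.card = ∑ i ∈ Finset.range p, ∑ j ∈ Finset.range q, f i j := by
      rw [Finset.sum_congr rfl (fun i _ => s1 i), Finset.sum_comm, cn_total A hM]
      exact Finset.sum_congr rfl fun x _ => cn_split A hM hp x
    rw [this, Finset.sum_congr rfl (fun i hi => t1 i (by simpa using hi)), Finset.sum_add_distrib,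
      ← Finset.mul_sum]
    simp
  rw [tot]
  apply num_core hp hq hpq
  · intro i hi
    rw [← t1 i hi, s1]
    exact Finset.dvd_sum fun x _ => dp _
  · intro j hj
    rw [← t2 j hj, s2]
    exact Finset.dvd_sum fun x _ => dq _
  · rw [← tot]; exact hA.card_pos

lemma core {A : Finset ℕ} {p q a b c d : ℕ} (hp : 0 < p) (hq : 0 < q) (hpq : p.Coprime q)
    (hA : A.Nonempty) (ha : 1 ≤ a) (hb : 1 ≤ b) (hc : 1 ≤ c) (hd : 1 ≤ d)
    (hP : PF A p (p ^ (c - 1)) 1) (hQ : PF A q (q ^ (d - 1)) 1)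
    (h : Exch A p q (p ^ (a - 1)) (q ^ (b - 1))) (hca : c ≠ a) (hdb : d ≠ b) :
    p * q * min p q ≤ A.card := by
  rcases lt_or_gt_of_ne hca with h1 | h1
  · exact core_below hp hq hpq hA hb hc hd hP hQ h h1 hdb
  · rcases lt_or_gt_of_ne hdb with h2 | h2
    · have := core_below hq hp hpq.symm hA ha hd hc hQ hP h.swap h2 hca
      rwa [mul_comm q p, min_comm] at this
    · exact core_above hp hq hpq hA ha hb hP hQ h h1 h2

/-- The combinatorial form of `Φ_{p^a q^b} ∣ A`. -/
def Cond (A : Finset ℕ) (p q a b : ℕ) : Prop :=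
  (1 ≤ a → 1 ≤ b → Exch A p q (p ^ (a - 1)) (q ^ (b - 1))) ∧
  (b = 0 → PF A p (p ^ (a - 1)) 1) ∧ (a = 0 → PF A q (q ^ (b - 1)) 1)

lemma Cond.swap {A : Finset ℕ} {p q a b : ℕ} (h : Cond A p q a b) : Cond A q p b a :=
  ⟨fun h1 h2 => (h.1 h2 h1).swap, h.2.2, h.2.1⟩

lemma Cond.slice {A : Finset ℕ} {p q a b a1 : ℕ} (h : Cond A p q a b) (h1 : a1 < a) (r : ℕ) :
    Cond (A.filter (fun k => k ≡ r [MOD p ^ a1])) p q a b := by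
  have hd : p ^ a1 ∣ p ^ (a - 1) := pow_dvd_pow _ (by omega)
  exact ⟨fun h2 h3 => (h.1 h2 h3).slice hd r, fun h2 => (h.2.1 h2).slice hd r, fun h2 => by omega⟩

/-- all `p` lifts of some residue class are occupied -/
def Occ (A : Finset ℕ) (p a : ℕ) : Prop :=
  ∃ x, ∀ x', x' ≡ x [MOD p ^ (a - 1)] → 0 < cn A (p ^ a) x'

lemma occ_of_PF {A : Finset ℕ} {p a n : ℕ} (hA : A.Nonempty) (ha : 1 ≤ a) (hn : 0 < n)
    (h : PF A p (p ^ (a - 1)) n) : Occ A p a := by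
  obtain ⟨k, hk⟩ := hA
  refine ⟨k, fun x' hx => ?_⟩
  have := h.cn hn hx
  rw [pow_pred_mul ha] at this
  rw [this]
  exact Finset.card_pos.2 ⟨k, Finset.mem_filter.2 ⟨hk, rfl⟩⟩

lemma QF_of_not_occ {A : Finset ℕ} {p q a b : ℕ} (ha : 1 ≤ a) (hb : 1 ≤ b)
    (h : Exch A p q (p ^ (a - 1)) (q ^ (b - 1))) (hocc : ¬ Occ A p a) :
    PF A q (q ^ (b - 1)) (p ^ a) := by
  have key : ∀ x y y', y ≡ y' [MOD q ^ (b - 1)] →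
      cc A (p ^ a) (q ^ b) x y ≤ cc A (p ^ a) (q ^ b) x y' := by
    intro x y y' hy
    by_contra hlt
    apply hocc
    refine ⟨x, fun x' hx => ?_⟩
    have := h x x' y y' hx.symm hy
    rw [pow_pred_mul ha, pow_pred_mul hb] at this
    have hpos : 0 < cc A (p ^ a) (q ^ b) x' y := by omega
    unfold cc at hpos
    obtain ⟨k, hk⟩ := Finset.card_pos.1 hpos
    simp only [Finset.mem_filter] at hk
    exact Finset.card_pos.2 ⟨k, by simp [hk]⟩
  intro y y' x hy
  rw [pow_pred_mul hb, cc_swap, cc_swap A _ _ y']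
  exact le_antisymm (key _ _ _ hy) (key _ _ _ hy.symm)

/-- Conclusion of the combinatorial theorem. -/
def Concl (p q : ℕ) (T : Finset (ℕ × ℕ)) (N : ℕ) : Prop :=
  ∃ E F : Finset ℕ, 0 ∉ E ∧ 0 ∉ F ∧ (∀ s ∈ T, s.1 ∈ E ∨ s.2 ∈ F) ∧ p ^ E.card * q ^ F.card ≤ N

lemma slice_step {A : Finset ℕ} {p q a1 : ℕ} (hp : 0 < p) (ha : 1 ≤ a1) (hocc : Occ A p a1)
    (T : Finset (ℕ × ℕ)) 
    (ih : ∀ r, (A.filter (fun k => k ≡ r [MOD p ^ a1])).Nonempty →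
      Concl p q (T.filter (fun s => s.1 ≠ a1)) (A.filter (fun k => k ≡ r [MOD p ^ a1])).card) :
    Concl p q T A.card := by
  obtain ⟨x, hx⟩ := hocc
  obtain ⟨i0, hi0, hmin⟩ := Finset.exists_min_image (Finset.range p)
    (fun i => cn A (p ^ a1) (x + i * p ^ (a1 - 1))) ⟨0, by simpa⟩
  have hne := hx (x + i0 * p ^ (a1 - 1)) (by simp [Nat.ModEq])
  obtain ⟨E, F, hE, hF, hc, hle⟩ := ih (x + i0 * p ^ (a1 - 1)) (Finset.card_pos.1 hne)
  refine ⟨insert a1 E, F, ?_, hF, ?_, ?_⟩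
  · simp only [Finset.mem_insert, not_or]; exact ⟨by omega, hE⟩
  · intro s hs
    by_cases h : s.1 = a1
    · left; simp [h]
    · rcases hc s (by simp [hs, h]) with h' | h'
      · left; simp [h']
      · right; exact h'
  · have h1 : cn A (p ^ (a1 - 1)) x ≤ A.card := Finset.card_filter_le _ _
    have h2 : p * cn A (p ^ a1) (x + i0 * p ^ (a1 - 1)) ≤ cn A (p ^ (a1 - 1)) x := by
      rw [cn_split A (pow_pos hp (a1 - 1)) hp x, pow_pred_mul ha]
      have := Finset.card_nsmul_le_sum (Finset.range p)
        (fun i => cn A (p ^ a1) (x + i * p ^ (a1 - 1))) _ hmin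
      simpa using this
    have h3 : p ^ (insert a1 E).card ≤ p ^ (E.card + 1) :=
      Nat.pow_le_pow_right hp (Finset.card_insert_le _ _)
    calc p ^ (insert a1 E).card * q ^ F.card ≤ p ^ (E.card + 1) * q ^ F.card :=
          Nat.mul_le_mul_right _ h3
      _ = p * (p ^ E.card * q ^ F.card) := by ring
      _ ≤ p * cn A (p ^ a1) (x + i0 * p ^ (a1 - 1)) := Nat.mul_le_mul_left _ hle
      _ ≤ A.card := h2.trans h1

lemma Concl.swap {p q N : ℕ} {T : Finset (ℕ × ℕ)} (h : Concl q p (T.image Prod.swap) N) :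
    Concl p q T N := by
  obtain ⟨E, F, hE, hF, hc, hle⟩ := h
  refine ⟨F, E, hF, hE, fun s hs => ?_, by rwa [mul_comm]⟩
  exact (hc s.swap (Finset.mem_image_of_mem _ hs)).symm

lemma Concl.swap_iff {p q N : ℕ} {T : Finset (ℕ × ℕ)} :
    Concl q p (T.image Prod.swap) N ↔ Concl p q T N := by
  refine ⟨Concl.swap, fun h => ?_⟩
  apply Concl.swap
  rw [Finset.image_image]
  simpa using h

theorem comb {p q : ℕ} (hp : 0 < p) (hq : 0 < q) (hpq : p.Coprime q) (k : ℕ) :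
    ∀ (T : Finset (ℕ × ℕ)), T.card = k → k ≤ 3 → (0, 0) ∉ T → ∀ A : Finset ℕ, A.Nonempty →
    (∀ s ∈ T, Cond A p q s.1 s.2) → Concl p q T A.card := by
  induction k using Nat.strong_induction_on with
  | _ k ih =>
  intro T hT hk h0 A hA hC
  rcases T.eq_empty_or_nonempty with rfl | hne
  · exact ⟨∅, ∅, by simp, by simp, by simp, by simpa using hA.card_pos⟩
  obtain ⟨s1, hs1, hmin1⟩ := Finset.exists_min_image T (fun s => s.1) hne
  obtain ⟨s2, hs2, hmin2⟩ := Finset.exists_min_image T (fun s => s.2) hne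
  have h0' : ∀ s ∈ T, s.1 = 0 → 1 ≤ s.2 := by
    intro s hs h
    by_contra h'
    apply h0
    have : s = (0, 0) := Prod.ext h (by simpa using h')
    rwa [← this]
  -- slicing in the p direction
  by_cases hX : 1 ≤ s1.1 ∧ Occ A p s1.1
  · apply slice_step hp hX.1 hX.2
    intro r hr
    refine ih _ ?_ _ rfl ?_ (by simp [h0]) _ hr ?_
    · rw [← hT]
      exact Finset.card_lt_card ((Finset.filter_ssubset).2 ⟨s1, hs1, by simp⟩)
    · exact (Finset.card_filter_le _ _).trans (hT ▸ hk)
    · intro s hs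
      simp only [Finset.mem_filter] at hs
      exact (hC s hs.1).slice (lt_of_le_of_ne (hmin1 s hs.1) (Ne.symm hs.2)) r
  by_cases hY : 1 ≤ s2.2 ∧ Occ A q s2.2
  · rw [← Concl.swap_iff]
    apply slice_step hq hY.1 hY.2
    intro r hr
    have e : (T.image Prod.swap).filter (fun s => s.1 ≠ s2.2)
        = (T.filter (fun s => s.2 ≠ s2.2)).image Prod.swap := by
      rw [Finset.filter_image]; rfl
    rw [e, Concl.swap_iff]
    refine ih _ ?_ _ rfl ?_ (by simp [h0]) _ hr ?_
    · rw [← hT]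
      exact Finset.card_lt_card ((Finset.filter_ssubset).2 ⟨s2, hs2, by simp⟩)
    · exact (Finset.card_filter_le _ _).trans (hT ▸ hk)
    · intro s hs
      simp only [Finset.mem_filter] at hs
      exact ((hC s hs.1).swap.slice (lt_of_le_of_ne (hmin2 s hs.1) (Ne.symm hs.2)) r).swap
  have HX : ∀ s ∈ T, s.1 = s1.1 → 1 ≤ s.2 ∧ PF A q (q ^ (s.2 - 1)) (p ^ s.1) := by
    intro s hs he
    obtain ⟨c1, c2, c3⟩ := hC s hs
    rcases Nat.eq_zero_or_pos s.1 with h | h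
    · refine ⟨h0' s hs h, ?_⟩
      rw [h, pow_zero]; exact c3 h
    · have hocc : ¬ Occ A p s.1 := fun h' => hX ⟨he ▸ h, he ▸ h'⟩
      rcases Nat.eq_zero_or_pos s.2 with h' | h'
      · exact absurd (occ_of_PF hA h one_pos (c2 h')) hocc
      · exact ⟨h', QF_of_not_occ h h' (c1 h h') hocc⟩
  have HY : ∀ s ∈ T, s.2 = s2.2 → 1 ≤ s.1 ∧ PF A p (p ^ (s.1 - 1)) (q ^ s.2) := by
    intro s hs he
    obtain ⟨c1, c2, c3⟩ := hC s hs
    rcases Nat.eq_zero_or_pos s.2 with h | h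
    · refine ⟨?_, ?_⟩
      · by_contra h'
        have := h0' s hs (by omega)
        omega
      · rw [h, pow_zero]; exact c2 h
    · have hocc : ¬ Occ A q s.2 := fun h' => hY ⟨he ▸ h, he ▸ h'⟩
      rcases Nat.eq_zero_or_pos s.1 with h' | h'
      · exact absurd (occ_of_PF hA h one_pos (c3 h')) hocc
      · exact ⟨h', QF_of_not_occ h h' (c1 h' h).swap hocc⟩
  have hdisj : ∀ s ∈ T, s.1 = s1.1 → s.2 = s2.2 → False := by
    intro s hs e1 e2
    have a1 := HX s hs e1
    have a2 := HY s hs e2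
    have := occ_of_PF hA a2.1 (pow_pos hq _) a2.2
    exact hX ⟨e1 ▸ a2.1, e1 ▸ this⟩
  set Tx := T.filter (fun s => s.1 = s1.1) with hTx
  set Ty := T.filter (fun s => s.2 = s2.2) with hTy
  set E := Ty.image Prod.fst with hE
  set F := Tx.image Prod.snd with hF
  have hEP : ∀ e ∈ E, 1 ≤ e ∧ PF A p (p ^ (e - 1)) 1 := by
    intro e he
    simp only [hE, hTy, Finset.mem_image, Finset.mem_filter] at he
    obtain ⟨s, ⟨hs, h2⟩, rfl⟩ := he
    exact ⟨(HY s hs h2).1, (HY s hs h2).2.coarse (pow_pos hq _)⟩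
  have hFP : ∀ e ∈ F, 1 ≤ e ∧ PF A q (q ^ (e - 1)) 1 := by
    intro e he
    simp only [hF, hTx, Finset.mem_image, Finset.mem_filter] at he
    obtain ⟨s, ⟨hs, h2⟩, rfl⟩ := he
    exact ⟨(HX s hs h2).1, (HX s hs h2).2.coarse (pow_pos hp _)⟩
  have hE0 : 0 ∉ E := fun h => by have := (hEP 0 h).1; omega
  have hF0 : 0 ∉ F := fun h => by have := (hFP 0 h).1; omega
  have hdv := Nat.le_of_dvd hA.card_pos (dvd_of_levels2 A hp hq hpq E F hEP hFP)
  by_cases hcov : ∀ s ∈ T, s.1 ∈ E ∨ s.2 ∈ F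
  · exact ⟨E, F, hE0, hF0, hcov, hdv⟩
  push Not at hcov
  obtain ⟨t, ht, htE, htF⟩ := hcov
  have ht1 : t.1 ≠ s1.1 := fun h => htF (Finset.mem_image_of_mem _ (by simp [hTx, ht, h]))
  have ht2 : t.2 ≠ s2.2 := fun h => htE (Finset.mem_image_of_mem _ (by simp [hTy, ht, h]))
  have m1 := hmin1 t ht
  have m2 := hmin2 t ht
  have hs12 : s1 ≠ s2 := fun h => hdisj s1 hs1 rfl (by rw [h])
  have hts1 : t ≠ s1 := fun h => ht1 (by rw [h])
  have hts2 : t ≠ s2 := fun h => ht2 (by rw [h])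
  have hTeq : T = {t, s1, s2} := by
    symm
    apply Finset.eq_of_subset_of_card_le
    · intro s hs
      simp only [Finset.mem_insert, Finset.mem_singleton] at hs
      rcases hs with rfl | rfl | rfl <;> assumption
    · rw [Finset.card_eq_three.2 ⟨t, s1, s2, hts1, hts2, hs12, rfl⟩]; omega
  have hw : s2.1 ∈ E := Finset.mem_image_of_mem _ (by simp [hTy, hs2])
  have hu : s1.2 ∈ F := Finset.mem_image_of_mem _ (by simp [hTx, hs1])
  have hcore := core (a := t.1) (b := t.2) hp hq hpq hA (by omega) (by omega)
    (hEP _ hw).1 (hFP _ hu).1 (hEP _ hw).2 (hFP _ hu).2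
    ((hC t ht).1 (by omega) (by omega)) (fun h => htE (h ▸ hw)) (fun h => htF (h ▸ hu))
  rcases le_total p q with hle | hle
  · rw [min_eq_left hle] at hcore
    refine ⟨{t.1, s2.1}, {s1.2}, ?_, ?_, ?_, ?_⟩
    · simp only [Finset.mem_insert, Finset.mem_singleton, not_or]
      have := (hEP _ hw).1
      omega
    · simp only [Finset.mem_singleton]
      have := (hFP _ hu).1
      omega
    · rw [hTeq]; simp
    · rw [Finset.card_pair (fun h : t.1 = s2.1 => htE (by rw [h]; exact hw)), Finset.card_singleton]
      nlinarith
  · rw [min_eq_right hle] at hcore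
    refine ⟨{s2.1}, {t.2, s1.2}, ?_, ?_, ?_, ?_⟩
    · simp only [Finset.mem_singleton]
      have := (hEP _ hw).1
      omega
    · simp only [Finset.mem_insert, Finset.mem_singleton, not_or]
      have := (hFP _ hu).1
      omega
    · rw [hTeq]; simp
    · rw [Finset.card_pair (fun h : t.2 = s1.2 => htF (by rw [h]; exact hu)), Finset.card_singleton]
      nlinarith

lemma rel_of_dvd {s : ℕ} {P : ℤ[X]} (h : (X ^ s - 1 : ℤ[X]) ∣ P) (g : ℕ → ℤ)
    (hg : ∀ n, g (n + s) = g n) : P.sum (fun n c => c * g n) = 0 := by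
  let ℓ : ℤ[X] →ₗ[ℤ] ℤ := Polynomial.lsum (fun n => LinearMap.mulRight ℤ (g n))
  have hl : ∀ P : ℤ[X], P.sum (fun n c => c * g n) = ℓ P := by
    intro P; simp [ℓ, Polynomial.lsum_apply]
  rw [hl]
  obtain ⟨Q, rfl⟩ := h
  induction Q using Polynomial.induction_on' with
  | add p q hp hq => rw [mul_add, map_add, hp, hq, add_zero]
  | monomial n a =>
    rw [sub_mul, one_mul, map_sub, ← hl, ← hl, X_pow_mul_monomial,
      Polynomial.sum_monomial_index _ _ (by simp), Polynomial.sum_monomial_index _ _ (by simp), hg,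
      sub_self]

lemma sum_mask_mul (A : Finset ℕ) (k : ℕ) (g : ℕ → ℤ) :
    (maskPoly A * X ^ k).sum (fun n c => c * g n) = ∑ a ∈ A, g (a + k) := by
  let ℓ : ℤ[X] →ₗ[ℤ] ℤ := Polynomial.lsum (fun n => LinearMap.mulRight ℤ (g n))
  have hl : ∀ P : ℤ[X], P.sum (fun n c => c * g n) = ℓ P := by
    intro P; simp [ℓ, Polynomial.lsum_apply]
  rw [hl, maskPoly, Finset.sum_mul, map_sum]
  refine Finset.sum_congr rfl fun a _ => ?_
  rw [← hl, ← pow_add, ← monomial_one_right_eq_X_pow, Polynomial.sum_monomial_index _ _ (by simp),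
    one_mul]

lemma sum_sub' (g : ℕ → ℤ) (P Q : ℤ[X]) : (P - Q).sum (fun n c => c * g n) =
    P.sum (fun n c => c * g n) - Q.sum (fun n c => c * g n) := by
  let ℓ : ℤ[X] →ₗ[ℤ] ℤ := Polynomial.lsum (fun n => LinearMap.mulRight ℤ (g n))
  have hl : ∀ P : ℤ[X], P.sum (fun n c => c * g n) = ℓ P := by
    intro P; simp [ℓ, Polynomial.lsum_apply]
  rw [hl, hl, hl, map_sub]

lemma sum_ind (A : Finset ℕ) (s z k : ℕ) :
    ∑ a ∈ A, (if a + k ≡ z + k [MOD s] then (1 : ℤ) else 0) = cn A s z := by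
  rw [Finset.sum_boole, cn]
  congr 2; ext n
  simp only [Finset.mem_filter]
  exact and_congr_right fun _ => ⟨Nat.ModEq.add_right_cancel' k, Nat.ModEq.add_right k⟩

lemma cn_rel_one {A : Finset ℕ} {s α : ℕ}
    (h : (X ^ s - 1 : ℤ[X]) ∣ maskPoly A * (X ^ α - 1)) (z : ℕ) :
    cn A s (z + α) = cn A s z := by
  have key := rel_of_dvd h (fun n => if n ≡ z + α [MOD s] then 1 else 0)
    (fun n => by
      refine if_congr ?_ rfl rfl
      simp [Nat.ModEq])
  have e : maskPoly A * (X ^ α - 1) = maskPoly A * X ^ α - maskPoly A * X ^ 0 := by ring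
  rw [e, sum_sub', sum_mask_mul, sum_mask_mul, sum_ind] at key
  have := sum_ind A s (z + α) 0
  simp only [add_zero] at this key
  rw [this] at key
  have : (cn A s z : ℤ) = cn A s (z + α) := by linarith
  exact_mod_cast this.symm

lemma cn_rel_two {A : Finset ℕ} {s α β : ℕ}
    (h : (X ^ s - 1 : ℤ[X]) ∣ maskPoly A * ((X ^ α - 1) * (X ^ β - 1))) (z : ℕ) :
    cn A s z + cn A s (z + α + β) = cn A s (z + α) + cn A s (z + β) := by
  have key := rel_of_dvd h (fun n => if n ≡ z + (α + β) [MOD s] then 1 else 0)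
    (fun n => by
      refine if_congr ?_ rfl rfl
      simp [Nat.ModEq])
  have e : maskPoly A * ((X ^ α - 1) * (X ^ β - 1)) = (maskPoly A * X ^ (α + β)
    - maskPoly A * X ^ α) - (maskPoly A * X ^ β - maskPoly A * X ^ 0) := by ring
  rw [e, sum_sub', sum_sub', sum_sub', sum_mask_mul, sum_mask_mul, sum_mask_mul, sum_mask_mul,
    sum_ind] at key
  have h0 := sum_ind A s (z + α + β) 0
  have h1 := sum_ind A s (z + β) α
  have h2 := sum_ind A s (z + α) β
  have e1 : z + β + α = z + (α + β) := by ring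
  have e2 : z + α + β = z + (α + β) := by ring
  simp only [e1, e2, add_zero] at h0 h1 h2 key
  rw [h0, h1, h2] at key
  rw [e2]
  have : (cn A s z : ℤ) + cn A s (z + (α + β)) = cn A s (z + α) + cn A s (z + β) := by linarith
  exact_mod_cast this

lemma cn_rel_one_mul {A : Finset ℕ} {s α : ℕ} (h : ∀ z, cn A s (z + α) = cn A s z) (i z : ℕ) :
    cn A s (z + i * α) = cn A s z := by
  induction i with
  | zero => simp
  | succ i ih => rw [Nat.succ_mul, ← add_assoc, h, ih]

lemma cn_rel_two_mul {A : Finset ℕ} {s α β : ℕ}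
    (h : ∀ z, cn A s z + cn A s (z + α + β) = cn A s (z + α) + cn A s (z + β)) (i j z : ℕ) :
    cn A s z + cn A s (z + i * α + j * β) = cn A s (z + i * α) + cn A s (z + j * β) := by
  have h1 : ∀ i z, cn A s z + cn A s (z + i * α + β) = cn A s (z + i * α) + cn A s (z + β) := by
    intro i z
    induction i with
    | zero => simp [add_comm]
    | succ i ih =>
      have := h (z + i * α)
      rw [Nat.succ_mul, ← add_assoc]; omega
  induction j with
  | zero => simp [add_comm]
  | succ j ih =>
    have := h1 i (z + j * β)
    have e : z + j * β + i * α = z + i * α + j * β := by ring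
    rw [e] at this
    rw [Nat.succ_mul, ← add_assoc, ← add_assoc]; omega

lemma exists_shift {s α z w : ℕ} (hs : 0 < s) (hα : α ∣ s) (h : z ≡ w [MOD α]) :
    ∃ i, w ≡ z + i * α [MOD s] := by
  have h1 : z ≡ w + s * z [MOD α] := by
    refine h.trans ?_
    obtain ⟨t, rfl⟩ := hα
    rw [mul_assoc]; simp [Nat.ModEq]
  have hle : z ≤ w + s * z := by nlinarith
  obtain ⟨i, hi⟩ := (Nat.modEq_iff_dvd' hle).1 h1
  refine ⟨i, ?_⟩
  have : z + i * α = w + s * z := by rw [mul_comm]; omega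
  rw [this]; simp [Nat.ModEq]

lemma cyc_relPrime {d e : ℕ} (hd : 0 < d) (he : 0 < e) (h : d ≠ e) :
    IsRelPrime (cyclotomic d ℤ) (cyclotomic e ℤ) := by
  rw [(cyclotomic.irreducible hd).isRelPrime_iff_not_dvd]
  intro hdvd
  have hass := (cyclotomic.irreducible hd).associated_of_dvd (cyclotomic.irreducible he) hdvd
  exact h (cyclotomic_injective (R := ℤ)
    (eq_of_monic_of_associated (cyclotomic.monic _ _) (cyclotomic.monic _ _) hass))

lemma X_pow_sub_one_dvd {n : ℕ} (hn : 0 < n) {P : ℤ[X]}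
    (h : ∀ d ∈ n.divisors, cyclotomic d ℤ ∣ P) : (X ^ n - 1 : ℤ[X]) ∣ P := by
  rw [← prod_cyclotomic_eq_X_pow_sub_one hn]
  apply Finset.prod_dvd_of_isRelPrime
  · intro d hd e he hde
    exact cyc_relPrime (Nat.pos_of_mem_divisors hd) (Nat.pos_of_mem_divisors he) hde
  · exact h

lemma cyc_dvd_of_dvd {d n : ℕ} (h : d ∣ n) : cyclotomic d ℤ ∣ (X ^ n - 1 : ℤ[X]) :=
  (cyclotomic.dvd_X_pow_sub_one d ℤ).trans (by
    obtain ⟨t, rfl⟩ := h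
    simpa [pow_mul] using sub_dvd_pow_sub_pow (X ^ d : ℤ[X]) 1 t)

lemma dvd_pq {p q a b d : ℕ} (hp : p.Prime) (hq : q.Prime) (ha : 1 ≤ a) (hb : 1 ≤ b) 
    (hd : d ∣ p ^ a * q ^ b) (hne : d ≠ p ^ a * q ^ b) :
    d ∣ p ^ (a - 1) * q ^ b ∨ d ∣ p ^ a * q ^ (b - 1) := by
  obtain ⟨d1, d2, h1, h2, rfl⟩ := (Nat.dvd_mul).1 hd
  obtain ⟨i, hi, rfl⟩ := (Nat.dvd_prime_pow hp).1 h1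
  obtain ⟨j, hj, rfl⟩ := (Nat.dvd_prime_pow hq).1 h2
  rcases Nat.lt_or_ge i a with h | h
  · left; exact Nat.mul_dvd_mul (pow_dvd_pow _ (by omega)) h2
  · rcases Nat.lt_or_ge j b with h' | h'
    · right; exact Nat.mul_dvd_mul h1 (pow_dvd_pow _ (by omega))
    · exact absurd (by rw [le_antisymm hi h, le_antisymm hj h']) hne

lemma cc_crt (A : Finset ℕ) {m n z x y : ℕ} (hmn : m.Coprime n) (hx : z ≡ x [MOD m])
    (hy : z ≡ y [MOD n]) : cc A m n x y = cn A (m * n) z := by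
  rw [cc_congr A hx.symm hy.symm]
  unfold cc cn; congr 1; ext k
  simp only [Finset.mem_filter]
  rw [Nat.modEq_and_modEq_iff_modEq_mul hmn]

lemma PF_of_pow {A : Finset ℕ} {p a : ℕ} (hp : p.Prime) (ha : 1 ≤ a)
    (h : cyclotomic (p ^ a) ℤ ∣ maskPoly A) : PF A p (p ^ (a - 1)) 1 := by
  intro x x' y hx
  rw [pow_pred_mul ha, cc_one_right, cc_one_right]
  have hd : (X ^ (p ^ a) - 1 : ℤ[X]) ∣ maskPoly A * (X ^ (p ^ (a - 1)) - 1) := by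
    apply X_pow_sub_one_dvd (pow_pos hp.pos _)
    intro d hd
    obtain ⟨i, hi, rfl⟩ := (Nat.dvd_prime_pow hp).1 (Nat.dvd_of_mem_divisors hd)
    rcases hi.lt_or_eq with h' | rfl
    · exact (cyc_dvd_of_dvd (pow_dvd_pow _ (by omega))).mul_left _
    · exact h.mul_right _
  obtain ⟨i, hi⟩ := exists_shift (s := p ^ a) (pow_pos hp.pos _) (pow_dvd_pow p (by omega)) hx
  rw [cn_congr A hi, cn_rel_one_mul (cn_rel_one hd)]

lemma Exch_of_cyc {A : Finset ℕ} {p q a b : ℕ} (hp : p.Prime) (hq : q.Prime) (hpq : p ≠ q)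
    (ha : 1 ≤ a) (hb : 1 ≤ b)
    (h : cyclotomic (p ^ a * q ^ b) ℤ ∣ maskPoly A) :
    Exch A p q (p ^ (a - 1)) (q ^ (b - 1)) := by
  intro x x' y y' hx hy
  rw [pow_pred_mul ha, pow_pred_mul hb]
  have hco : p.Coprime q := (Nat.coprime_primes hp hq).2 hpq
  have hcab : ∀ i j, (p ^ i).Coprime (q ^ j) := fun i j => Nat.Coprime.pow _ _ hco
  have hs : 0 < p ^ a * q ^ b := Nat.mul_pos (pow_pos hp.pos _) (pow_pos hq.pos _)
  have hd : (X ^ (p ^ a * q ^ b) - 1 : ℤ[X]) ∣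
      maskPoly A * ((X ^ (p ^ (a - 1) * q ^ b) - 1) * (X ^ (p ^ a * q ^ (b - 1)) - 1)) := by
    apply X_pow_sub_one_dvd hs
    intro d hd
    by_cases hne : d = p ^ a * q ^ b
    · rw [hne]; exact h.mul_right _
    · rcases dvd_pq hp hq ha hb (Nat.dvd_of_mem_divisors hd) hne with h' | h'
      · exact ((cyc_dvd_of_dvd h').mul_right _).mul_left _
      · exact ((cyc_dvd_of_dvd h').mul_left _).mul_left _
  obtain ⟨z, hz1, hz2⟩ := Nat.chineseRemainder (hcab a b) x y
  obtain ⟨z1, hz11, hz12⟩ := Nat.chineseRemainder (hcab a b) x' y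
  obtain ⟨z2, hz21, hz22⟩ := Nat.chineseRemainder (hcab a b) x y'
  have da : p ^ (a - 1) ∣ p ^ a := pow_dvd_pow _ (by omega)
  have db : q ^ (b - 1) ∣ q ^ b := pow_dvd_pow _ (by omega)
  obtain ⟨i, hi⟩ := exists_shift (z := z) (w := z1) hs (Nat.mul_dvd_mul_right da (q ^ b))
    ((Nat.modEq_and_modEq_iff_modEq_mul (hcab _ _)).1
      ⟨((hz1.of_dvd da).trans hx).trans (hz11.of_dvd da).symm, hz2.trans hz12.symm⟩)
  obtain ⟨j, hj⟩ := exists_shift (z := z) (w := z2) hs (Nat.mul_dvd_mul_left (p ^ a) db)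
    ((Nat.modEq_and_modEq_iff_modEq_mul (hcab _ _)).1
      ⟨hz1.trans hz21.symm, ((hz2.of_dvd db).trans hy).trans (hz22.of_dvd db).symm⟩)
  rw [cc_crt A (hcab a b) hz1 hz2, cc_crt A (hcab a b) hz11 hz12, cc_crt A (hcab a b) hz21 hz22,
    cn_congr A hi, cn_congr A hj]
  have h3 := cn_rel_two_mul (cn_rel_two hd) i j z
  rw [cc_crt A (hcab a b) (z := z + i * (p ^ (a - 1) * q ^ b) + j * (p ^ a * q ^ (b - 1)))]
  · omega
  · have e1 : z + i * (p ^ (a - 1) * q ^ b) ≡ x' [MOD p ^ a] := (hi.of_mul_right _).symm.trans hz11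
    have e2 : j * (p ^ a * q ^ (b - 1)) ≡ 0 [MOD p ^ a] :=
      Nat.modEq_zero_iff_dvd.2 ((Nat.dvd_mul_right _ _).mul_left _)
    exact e1.add e2
  · have e1 : z + j * (p ^ a * q ^ (b - 1)) ≡ y' [MOD q ^ b] := (hj.of_mul_left _).symm.trans hz22
    have e2 : i * (p ^ (a - 1) * q ^ b) ≡ 0 [MOD q ^ b] :=
      Nat.modEq_zero_iff_dvd.2 ((Nat.dvd_mul_left _ _).mul_left _)
    have := e1.add e2
    rwa [add_right_comm, add_zero] at this

lemma Cond_of_cyc {A : Finset ℕ} {p q a b : ℕ} (hp : p.Prime) (hq : q.Prime) (hpq : p ≠ q)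
    (hab : 1 ≤ a ∨ 1 ≤ b) (h : cyclotomic (p ^ a * q ^ b) ℤ ∣ maskPoly A) : Cond A p q a b := by
  refine ⟨fun ha hb => Exch_of_cyc hp hq hpq ha hb h, ?_, ?_⟩
  · rintro rfl
    exact PF_of_pow hp (by omega) (by simpa using h)
  · rintro rfl
    exact PF_of_pow hq (by omega) (by simpa using h)

lemma fiber_mul {N p : ℕ} (hd : p ∣ N) :
    fiberPoly N p * (X ^ (N / p) - 1) = (X ^ N - 1 : ℤ[X]) := by
  have := geom_sum_mul (X ^ (N / p) : ℤ[X]) p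
  rw [← pow_mul, Nat.div_mul_cancel hd] at this
  rw [← this, fiberPoly]
  simp only [← pow_mul, mul_comm (N / p)]

lemma cyc_dvd_fiber {N p : ℕ} (hN : 0 < N) (hp : p.Prime) (hd : p ∣ N) :
    cyclotomic N ℤ ∣ fiberPoly N p := by
  have h1 : cyclotomic N ℤ ∣ fiberPoly N p * (X ^ (N / p) - 1) := by
    rw [fiber_mul hd]; exact cyc_dvd_of_dvd dvd_rfl
  have hlt : N / p < N := Nat.div_lt_self hN hp.one_lt
  have hpos : 0 < N / p := Nat.div_pos (Nat.le_of_dvd hN hd) hp.pos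
  have hmem : N / p ∈ N.properDivisors := Nat.mem_properDivisors.2 ⟨Nat.div_dvd_of_dvd hd, hlt⟩
  have h2 := X_pow_sub_one_mul_cyclotomic_dvd_X_pow_sub_one_of_dvd ℤ hmem
  rw [← fiber_mul hd, mul_comm] at h2
  exact (mul_dvd_mul_iff_right (X_pow_sub_C_ne_zero hpos (1 : ℤ))).1 (by simpa using h2)

/-- `1 + Y + ... + Y^(p-1)` divides `1 + Y^r + ... + Y^(r(p-1))` for `r` coprime to `p`. -/
lemma geom_dvd {R : Type*} [CommRing R] (Y : R) {p r : ℕ} (hp : 0 < p) (h : r.Coprime p) :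
    (∑ j ∈ Finset.range p, Y ^ j) ∣ ∑ j ∈ Finset.range p, Y ^ (j * r) := by
  have hperm : ∑ j ∈ Finset.range p, Y ^ (j * r % p) = ∑ j ∈ Finset.range p, Y ^ j := by
    have hinj : Set.InjOn (fun j => j * r % p) (Finset.range p : Set ℕ) := by
      intro i hi j hj hij
      have h1 : i * r ≡ j * r [MOD p] := hij
      have h2 : i ≡ j [MOD p] := Nat.ModEq.cancel_right_of_coprime h.symm h1
      simp only [Finset.coe_range, Set.mem_Iio] at hi hj
      exact h2.eq_of_lt_of_lt hi hj
    have himg : (Finset.range p).image (fun j => j * r % p) = Finset.range p := by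
      apply Finset.eq_of_subset_of_card_le
      · intro x hx
        obtain ⟨j, _, rfl⟩ := Finset.mem_image.1 hx
        exact Finset.mem_range.2 (Nat.mod_lt _ hp)
      · rw [Finset.card_image_of_injOn hinj]
    conv_rhs => rw [← himg]
    rw [Finset.sum_image hinj]
  have hdiff : (∑ j ∈ Finset.range p, Y ^ j) ∣
      ∑ j ∈ Finset.range p, (Y ^ (j * r) - Y ^ (j * r % p)) := by
    refine Finset.dvd_sum fun j _ => ?_
    have h1 : (∑ j ∈ Finset.range p, Y ^ j) ∣ Y ^ p - 1 := ⟨Y - 1, (geom_sum_mul Y p).symm⟩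
    refine h1.trans ?_
    have h2 : Y ^ (j * r) - Y ^ (j * r % p)
        = Y ^ (j * r % p) * ((Y ^ p) ^ (j * r / p) - 1 ^ (j * r / p)) := by
      conv_lhs => rw [← Nat.mod_add_div (j * r) p]
      rw [pow_add, pow_mul, one_pow, Nat.add_mul_mod_self_left, Nat.mod_mod]
      ring
    rw [h2]
    exact (sub_dvd_pow_sub_pow _ _ _).mul_left _
  rw [Finset.sum_sub_distrib, hperm] at hdiff
  exact (dvd_sub_self_right).1 hdiff

lemma fiber_dvd_big {p q e b L : ℕ} (hp : p.Prime) (hq : q.Prime) (hpq : p ≠ q) (he : 1 ≤ e)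
    (hb : b ≤ L) : fiberPoly (p ^ e * q ^ b) p ∣
      ∑ j ∈ Finset.range p, (X : ℤ[X]) ^ (j * (p ^ (e - 1) * q ^ L)) := by
  have hco : (q ^ (L - b)).Coprime p :=
    Nat.Coprime.pow_left _ ((Nat.coprime_primes hq hp).2 hpq.symm)
  have h := geom_dvd (X ^ (p ^ (e - 1) * q ^ b) : ℤ[X]) hp.pos hco
  have hdiv : p ^ e * q ^ b / p = p ^ (e - 1) * q ^ b := by
    obtain ⟨e, rfl⟩ : ∃ k, e = k + 1 := ⟨e - 1, by omega⟩
    apply Nat.div_eq_of_eq_mul_left hp.pos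
    rw [Nat.add_sub_cancel]; ring
  have hL : q ^ L = q ^ b * q ^ (L - b) := by rw [← pow_add]; congr 1; omega
  rw [fiberPoly, hdiv, hL]
  convert h using 2
  · rw [← pow_mul, mul_comm]
  · rw [← pow_mul]; congr 1; ring

lemma expand_step (A : Finset ℕ) (hA : A.Nonempty) (p d : ℕ) (hp : 0 < p)
    (hd : ∀ a ∈ A, a < d) : ∃ A' : Finset ℕ, A'.Nonempty ∧ A'.card = p * A.card ∧
      maskPoly A' = maskPoly A * ∑ j ∈ Finset.range p, (X : ℤ[X]) ^ (j * d) := by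
  have hinj : Set.InjOn (fun x : ℕ × ℕ => x.1 + x.2 * d)
      ((A ×ˢ Finset.range p : Finset (ℕ × ℕ)) : Set (ℕ × ℕ)) := by
    rintro ⟨a, i⟩ hx ⟨b, j⟩ hy hxy
    have ha := hd a (Finset.mem_product.1 hx).1
    have hb := hd b (Finset.mem_product.1 hy).1
    simp only at hxy
    have hab : a = b := by
      have := congrArg (· % d) hxy
      simpa [Nat.mod_eq_of_lt ha, Nat.mod_eq_of_lt hb] using this
    subst hab
    have h2 : i * d = j * d := by omega
    have : i = j := Nat.eq_of_mul_eq_mul_right (by omega) h2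
    rw [this]
  refine ⟨(A ×ˢ Finset.range p).image (fun x => x.1 + x.2 * d), ?_, ?_, ?_⟩
  · exact (hA.product ⟨0, Finset.mem_range.2 hp⟩).image _
  · rw [Finset.card_image_of_injOn hinj, Finset.card_product, Finset.card_range, mul_comm]
  · rw [maskPoly, Finset.sum_image hinj, Finset.sum_product, maskPoly, Finset.sum_mul_sum]
    simp only [pow_add]

lemma expand {p q : ℕ} (hp : p.Prime) (hq : q.Prime) (hpq : p ≠ q) (A : Finset ℕ)
    (hA : A.Nonempty) (L : ℕ) (E : Finset ℕ) (hE : 0 ∉ E) :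
    ∃ A' : Finset ℕ, A'.Nonempty ∧ A'.card = p ^ E.card * A.card ∧ maskPoly A ∣ maskPoly A' ∧
      ∀ e ∈ E, ∀ b ≤ L, fiberPoly (p ^ e * q ^ b) p ∣ maskPoly A' := by
  induction E using Finset.induction_on with
  | empty => exact ⟨A, hA, by simp, dvd_rfl, by simp⟩
  | insert e E he ih =>
    rw [Finset.mem_insert, not_or] at hE
    obtain ⟨B, hB, hBc, hBd, hBf⟩ := ih hE.2
    have hlt : ∀ a ∈ B, a < p ^ (e - 1) * q ^ (L + B.sup id) := by
      intro a ha
      have h1 : a ≤ B.sup id := Finset.le_sup (f := id) ha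
      have h2 : L + B.sup id < q ^ (L + B.sup id) := Nat.lt_pow_self hq.one_lt
      have h3 : q ^ (L + B.sup id) ≤ p ^ (e - 1) * q ^ (L + B.sup id) :=
        Nat.le_mul_of_pos_left _ (pow_pos hp.pos _)
      omega
    obtain ⟨C, hC, hCc, hCm⟩ := expand_step B hB p _ hp.pos hlt
    refine ⟨C, hC, ?_, ?_, ?_⟩
    · rw [hCc, hBc, Finset.card_insert_of_notMem he]; ring
    · rw [hCm]; exact hBd.mul_right _
    · intro f hf b hb
      rw [hCm]
      rcases Finset.mem_insert.1 hf with rfl | hf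
      · exact (fiber_dvd_big hp hq hpq (by omega) (by omega)).mul_left _
      · exact (hBf f hf b hb).mul_right _

lemma construct {p q : ℕ} (hp : p.Prime) (hq : q.Prime) (hpq : p ≠ q) (E F : Finset ℕ)
    (hE : 0 ∉ E) (hF : 0 ∉ F) (L : ℕ) : ∃ A : Finset ℕ, A.Nonempty ∧
      A.card = p ^ E.card * q ^ F.card ∧
      ∀ a ≤ L, ∀ b ≤ L, a ∈ E ∨ b ∈ F → IsFibered A (p ^ a * q ^ b) := by
  obtain ⟨B, hB, hBc, -, hBf⟩ := expand hp hq hpq {0} (by simp) L E hE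
  obtain ⟨C, hC, hCc, hCd, hCf⟩ := expand hq hp hpq.symm B hB L F hF
  refine ⟨C, hC, ?_, ?_⟩
  · rw [hCc, hBc]; simp [mul_comm]
  · rintro a ha b hb (h | h)
    · have : a ≠ 0 := fun h0 => hE (h0 ▸ h)
      exact ⟨p, hp, (dvd_pow_self p this).mul_right _, (hBf a h b hb).trans hCd⟩
    · have : b ≠ 0 := fun h0 => hF (h0 ▸ h)
      refine ⟨q, hq, (dvd_pow_self q this).mul_left _, ?_⟩
      rw [mul_comm]; exact hCf b h a ha

lemma two_primes {P : Finset ℕ} (hP : ∀ x ∈ P, x.Prime) (hc : P.card ≤ 2) :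
    ∃ p q : ℕ, p.Prime ∧ q.Prime ∧ p ≠ q ∧ P ⊆ {p, q} := by
  have h3 : P.card = 0 ∨ P.card = 1 ∨ P.card = 2 := by omega
  rcases h3 with h | h | h
  · refine ⟨2, 3, Nat.prime_two, Nat.prime_three, by norm_num, ?_⟩
    rw [Finset.card_eq_zero.1 h]; simp
  · obtain ⟨p, rfl⟩ := Finset.card_eq_one.1 h
    obtain ⟨q, hq, hqp⟩ := Nat.exists_infinite_primes (p + 1)
    exact ⟨p, q, hP p (by simp), hqp, by omega, by simp⟩
  · obtain ⟨p, q, hpq, rfl⟩ := Finset.card_eq_two.1 h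
    exact ⟨p, q, hP p (by simp), hP q (by simp), hpq, Finset.Subset.refl _⟩

lemma eq_pq {p q s : ℕ} (hpq : p ≠ q) (hs : s ≠ 0)
    (h : s.primeFactors ⊆ {p, q}) : p ^ s.factorization p * q ^ s.factorization q = s := by
  conv_rhs => rw [← Nat.prod_factorization_pow_eq_self hs]
  rw [Finsupp.prod_of_support_subset _ (s := {p, q}) (by simpa using h) _ (by simp),
    Finset.prod_pair hpq]

/-- Theorem 1.3: if `1 ≤ |S| ≤ 3` and `lcm(S)` has at most two distinct prime factors,
then `MIN(S) = FIB(S)`. -/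
theorem min_eq_fib_of_card_le_three (S : Finset ℕ) (hS : S.Nonempty)
    (h2 : ∀ s ∈ S, 2 ≤ s) (hcard : S.card ≤ 3)
    (hlcm : (S.lcm id).primeFactors.card ≤ 2) :
    MINs S = FIBs S := by
  obtain ⟨p, q, hp, hq, hpq, hsub⟩ := two_primes (fun x hx => Nat.prime_of_mem_primeFactors hx) hlcm
  have hl0 : S.lcm id ≠ 0 := by
    rw [Ne, Finset.lcm_eq_zero_iff]
    rintro ⟨s, hs, h0⟩
    have h3 := h2 s hs
    simp only [id] at h0
    omega
  have heq : ∀ s ∈ S, p ^ s.factorization p * q ^ s.factorization q = s := by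
    intro s hs
    have h3 := h2 s hs
    exact eq_pq hpq (by omega)
      ((Nat.primeFactors_mono (Finset.dvd_lcm (f := id) hs) hl0).trans hsub)
  have hpos : ∀ s ∈ S, 1 ≤ s.factorization p ∨ 1 ≤ s.factorization q := by
    intro s hs
    by_contra hcon
    have e1 : s.factorization p = 0 := by omega
    have e2 : s.factorization q = 0 := by omega
    have h3 := heq s hs
    rw [e1, e2] at h3
    have h4 := h2 s hs
    simp at h3
    omega
  let T : Finset (ℕ × ℕ) := S.image (fun s => (s.factorization p, s.factorization q))
  have hT : ∀ s ∈ S, (s.factorization p, s.factorization q) ∈ T :=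
    fun s hs => Finset.mem_image_of_mem _ hs
  have hT0 : (0, 0) ∉ T := by
    intro h0
    obtain ⟨s, hs, hs0⟩ := Finset.mem_image.1 h0
    simp only [Prod.mk.injEq] at hs0
    have := hpos s hs
    omega
  -- every cover of `T` yields a set fibered on all scales
  have hcon : ∀ E F : Finset ℕ, 0 ∉ E → 0 ∉ F → (∀ s ∈ T, s.1 ∈ E ∨ s.2 ∈ F) →
      ∃ A : Finset ℕ, A.Nonempty ∧ A.card = p ^ E.card * q ^ F.card ∧
        ∀ s ∈ S, IsFibered A s := by
    intro E F hE hF hEF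
    obtain ⟨A, hA, hAc, hAf⟩ := construct hp hq hpq E F hE hF
      (S.sup (fun s => s.factorization p + s.factorization q))
    refine ⟨A, hA, hAc, fun s hs => ?_⟩
    have h3 : s.factorization p + s.factorization q ≤
        S.sup (fun s => s.factorization p + s.factorization q) :=
      Finset.le_sup (f := fun s : ℕ => s.factorization p + s.factorization q) hs
    have h4 := hAf (s.factorization p) (by omega) (s.factorization q) (by omega)
      (hEF _ (hT s hs))
    rwa [heq s hs] at h4
  have hcyc : ∀ A : Finset ℕ, (∀ s ∈ S, IsFibered A s) →
      ∀ s ∈ S, cyclotomic s ℤ ∣ maskPoly A := by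
    intro A hA s hs
    obtain ⟨r, hr, hrs, hd⟩ := hA s hs
    have h3 := h2 s hs
    exact (cyc_dvd_fiber (by omega) hr hrs).trans hd
  have hne : {k | ∃ A : Finset ℕ, A.Nonempty ∧ A.card = k ∧
      ∀ s ∈ S, IsFibered A s}.Nonempty := by
    obtain ⟨A, hA, -, hAf⟩ := hcon ((T.image Prod.fst).erase 0) ((T.image Prod.snd).erase 0)
      (Finset.notMem_erase _ _) (Finset.notMem_erase _ _) (by
        intro s hs
        by_cases h0 : s.1 = 0
        · right
          refine Finset.mem_erase.2 ⟨fun h1 => hT0 ?_, Finset.mem_image_of_mem _ hs⟩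
          have : s = (0, 0) := Prod.ext h0 h1
          rwa [← this]
        · left
          exact Finset.mem_erase.2 ⟨h0, Finset.mem_image_of_mem _ hs⟩)
    exact ⟨_, A, hA, rfl, hAf⟩
  have hle : MINs S ≤ FIBs S := by
    obtain ⟨A, hA, hAc, hAf⟩ := Nat.sInf_mem hne
    exact Nat.sInf_le ⟨A, hA, hAc, hcyc A hAf⟩
  have hne2 : {k | ∃ A : Finset ℕ, A.Nonempty ∧ A.card = k ∧
      ∀ s ∈ S, cyclotomic s ℤ ∣ maskPoly A}.Nonempty := by
    obtain ⟨k, A, hA, hAc, hAf⟩ := hne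
    exact ⟨k, A, hA, hAc, hcyc A hAf⟩
  refine le_antisymm hle ?_
  obtain ⟨A, hA, hAc, hAf⟩ := Nat.sInf_mem hne2
  have hTc : T.card ≤ 3 := Finset.card_image_le.trans hcard
  obtain ⟨E, F, hE, hF, hEF, hN⟩ := comb hp.pos hq.pos ((Nat.coprime_primes hp hq).2 hpq) T.card T
    rfl hTc hT0 A hA (by
      intro t ht
      obtain ⟨s, hs, rfl⟩ := Finset.mem_image.1 ht
      have h3 := hAf s hs
      rw [← heq s hs] at h3
      exact Cond_of_cyc hp hq hpq (hpos s hs) h3)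
  obtain ⟨B, hB, hBc, hBf⟩ := hcon E F hE hF hEF
  have h5 : FIBs S ≤ p ^ E.card * q ^ F.card := Nat.sInf_le ⟨B, hB, hBc, hBf⟩
  have h6 : A.card = MINs S := hAc
  omega
end

section
/- There exists a nonempty finite set S of integers, each at least 2, such that lcm(S) has exactly two distinct prime factors and MIN(S) < FIB(S). -/
open Polynomial

/-! ### The explicit set: 450 elements, with `Φ_9, Φ_27, Φ_25, Φ_125, Φ_15` dividing its mask. -/

def exList : List ℕ :=
  [22, 25, 31, 40, 44, 60, 94, 99, 100, 111, 122, 126, 139, 146, 160, 165, 176, 181, 212, 215,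
   216, 221, 235, 236, 237, 243, 260, 264, 266, 270, 277, 278, 279, 283, 292, 295, 310, 320, 332,
   349, 357, 367, 369, 377, 381, 418, 419, 439, 447, 450, 455, 468, 475, 478, 492, 500, 503, 524,
   550, 560, 581, 583, 585, 594, 602, 606, 609, 610, 623, 628, 630, 642, 644, 654, 655, 657, 660,
   679, 680, 687, 700, 713, 714, 720, 721, 730, 733, 744, 748, 760, 789, 793, 800, 808, 816, 821,
   838, 862, 874, 879, 892, 893, 895, 896, 921, 954, 955, 960, 967, 979, 980, 983, 994, 995, 1000,
   1008, 1010, 1011, 1012, 1015, 1022, 1027, 1040, 1045, 1070, 1073, 1074, 1079, 1082, 1100, 1115,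
   1116, 1118, 1125, 1127, 1164, 1167, 1179, 1182, 1190, 1192, 1200, 1203, 1208, 1222, 1231, 1262,
   1268, 1278, 1280, 1291, 1306, 1310, 1313, 1332, 1340, 1347, 1350, 1370, 1371, 1374, 1385, 1387,
   1391, 1395, 1400, 1401, 1403, 1412, 1432, 1445, 1455, 1462, 1479, 1482, 1489, 1491, 1495, 1509,
   1526, 1539, 1542, 1545, 1559, 1561, 1579, 1588, 1589, 1593, 1604, 1605, 1617, 1618, 1621, 1626,
   1630, 1649, 1650, 1656, 1663, 1665, 1680, 1683, 1690, 1695, 1696, 1698, 1703, 1711, 1716, 1720,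
   1722, 1735, 1740, 1747, 1757, 1771, 1772, 1776, 1787, 1803, 1812, 1815, 1817, 1824, 1827, 1834,
   1851, 1855, 1856, 1860, 1861, 1863, 1864, 1866, 1898, 1905, 1910, 1916, 1919, 1941, 1956, 1962,
   1973, 1974, 1976, 1999, 2000, 2015, 2020, 2025, 2029, 2030, 2046, 2047, 2049, 2052, 2054, 2058,
   2065, 2067, 2068, 2102, 2103, 2105, 2115, 2120, 2136, 2140, 2145, 2150, 2168, 2176, 2186, 2189,
   2190, 2193, 2199, 2211, 2217, 2230, 2237, 2238, 2245, 2248, 2258, 2259, 2273, 2274, 2277, 2284,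
   2297, 2298, 2300, 2302, 2314, 2321, 2322, 2340, 2342, 2350, 2353, 2360, 2375, 2378, 2380, 2385,
   2388, 2389, 2392, 2407, 2411, 2415, 2416, 2424, 2425, 2427, 2430, 2450, 2460, 2470, 2483, 2485,
   2489, 2505, 2508, 2525, 2534, 2549, 2553, 2560, 2563, 2568, 2572, 2575, 2591, 2595, 2598, 2609,
   2632, 2641, 2672, 2673, 2680, 2684, 2691, 2694, 2705, 2710, 2715, 2720, 2732, 2751, 2752, 2755,
   2760, 2761, 2763, 2781, 2787, 2788, 2795, 2800, 2805, 2807, 2809, 2820, 2823, 2826, 2840, 2846,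
   2850, 2865, 2879, 2881, 2882, 2894, 2908, 2910, 2911, 2921, 2923, 2951, 2952, 2965, 2997, 3000,
   3006, 3015, 3018, 3020, 3023, 3034, 3035, 3051, 3060, 3061, 3063, 3065, 3069, 3078, 3084, 3102,
   3120, 3121, 3134, 3138, 3140, 3163, 3170, 3180, 3201, 3214, 3218, 3226, 3234, 3280, 3285, 3290,
   3306, 3319, 3330, 3333, 3348, 3670, 3956, 3969, 4019, 4032, 4062, 4175, 4335, 4830, 5086, 5115,
   5178, 5202, 5209, 5238, 5280, 5786, 5845, 5950, 6130, 6195, 6240, 6254, 6283, 6515, 7710]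

theorem exList_nodup : exList.Nodup := by decide +kernel

theorem exList_length : exList.length = 450 := by decide +kernel

/-- number of elements of a list congruent to `r` mod `s` -/
def resCount (L : List ℕ) (s r : ℕ) : ℕ := L.countP (fun a => a % s == r)

theorem sum_resCount (L : List ℕ) (s : ℕ) (hs : 0 < s) (z : ℂ) (hz : z ^ s = 1) :
    (L.map (fun a => z ^ a)).sum = ∑ r ∈ Finset.range s, (resCount L s r : ℂ) * z ^ r := by
  induction L with
  | nil => simp [resCount]
  | cons a L ih =>
    rw [List.map_cons, List.sum_cons, ih]
    have h1 : ∀ r, (resCount (a :: L) s r : ℂ) * z ^ r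
        = (if a % s = r then z ^ r else 0) + (resCount L s r : ℂ) * z ^ r := by
      intro r
      unfold resCount
      rw [List.countP_cons]
      by_cases h : a % s = r
      · simp [h]; ring
      · simp [h]
    rw [Finset.sum_congr rfl (fun r _ => h1 r), Finset.sum_add_distrib, Finset.sum_ite_eq,
      if_pos (Finset.mem_range.2 (Nat.mod_lt _ hs))]
    congr 1
    conv_lhs => rw [← Nat.div_add_mod a s, pow_add, pow_mul, hz, one_pow, one_mul]

theorem sum_range_mul' (f : ℕ → ℂ) (d p : ℕ) :
    ∑ r ∈ Finset.range (d * p), f r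
      = ∑ j ∈ Finset.range p, ∑ i ∈ Finset.range d, f (d * j + i) := by
  induction p with
  | zero => simp
  | succ p ih => rw [Nat.mul_succ, Finset.sum_range_add, ih, Finset.sum_range_succ]

theorem periodic_sum_zero (f : ℕ → ℂ) (d p : ℕ) (hd : 0 < d) (hp : 1 < p) (z : ℂ)
    (hz : IsPrimitiveRoot z (d * p)) :
    ∑ r ∈ Finset.range (d * p), f (r % d) * z ^ r = 0 := by
  have hz' : IsPrimitiveRoot (z ^ d) p := hz.pow (by positivity) rfl
  rw [sum_range_mul']
  have : ∀ j ∈ Finset.range p, ∑ i ∈ Finset.range d, f ((d * j + i) % d) * z ^ (d * j + i)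
      = (z ^ d) ^ j * ∑ i ∈ Finset.range d, f i * z ^ i := by
    intro j _
    rw [Finset.mul_sum]
    refine Finset.sum_congr rfl fun i hi => ?_
    rw [Nat.mul_add_mod, Nat.mod_eq_of_lt (Finset.mem_range.1 hi), pow_add, pow_mul]
    ring
  rw [Finset.sum_congr rfl this, ← Finset.sum_mul, hz'.geom_sum_eq_zero hp, zero_mul]

theorem cyclotomic_dvd_of_counts (L : List ℕ) (hL : L.Nodup) (s d p e q : ℕ)
    (f g : ℕ → ℕ) (h1 : s = d * p) (h2 : s = e * q) (hd : 0 < d) (he : 0 < e) (hp : 1 < p)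
    (hq : 1 < q) (h : ∀ r ∈ Finset.range s, resCount L s r = f (r % d) + g (r % e)) :
    cyclotomic s ℤ ∣ maskPoly L.toFinset := by
  have hs : 0 < s := by rw [h1]; positivity
  have hz : IsPrimitiveRoot (Complex.exp (2 * Real.pi * Complex.I / s)) s :=
    Complex.isPrimitiveRoot_exp s hs.ne'
  generalize Complex.exp (2 * Real.pi * Complex.I / s) = z at hz
  rw [cyclotomic_eq_minpoly hz hs]
  refine minpoly.isIntegrallyClosed_dvd (hz.isIntegral hs) ?_
  have h0 : aeval z (maskPoly L.toFinset) = (L.map (fun a => z ^ a)).sum := by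
    rw [maskPoly, map_sum, List.sum_toFinset _ hL]
    simp
  rw [h0, sum_resCount L s hs z hz.pow_eq_one]
  have h3 : ∀ r ∈ Finset.range s, (resCount L s r : ℂ) * z ^ r
      = (f (r % d) : ℂ) * z ^ r + (g (r % e) : ℂ) * z ^ r := by
    intro r hr
    rw [h r hr]; push_cast; ring
  rw [Finset.sum_congr rfl h3, Finset.sum_add_distrib]
  have e1 := periodic_sum_zero (fun r => (f r : ℂ)) d p hd hp z (h1 ▸ hz)
  have e2 := periodic_sum_zero (fun r => (g r : ℂ)) e q he hq z (h2 ▸ hz)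
  rw [← h1] at e1
  rw [← h2] at e2
  rw [e1, e2, add_zero]

theorem ex_dvd : ∀ s ∈ ({9, 27, 25, 125, 15} : Finset ℕ),
    cyclotomic s ℤ ∣ maskPoly exList.toFinset := by
  intro s hs
  simp only [Finset.mem_insert, Finset.mem_singleton] at hs
  rcases hs with rfl | rfl | rfl | rfl | rfl
  · exact cyclotomic_dvd_of_counts _ exList_nodup 9 3 3 3 3 (resCount exList 9) (fun _ => 0)
      rfl rfl (by norm_num) (by norm_num) (by norm_num) (by norm_num) (by decide +kernel)
  · exact cyclotomic_dvd_of_counts _ exList_nodup 27 9 3 9 3 (resCount exList 27) (fun _ => 0)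
      rfl rfl (by norm_num) (by norm_num) (by norm_num) (by norm_num) (by decide +kernel)
  · exact cyclotomic_dvd_of_counts _ exList_nodup 25 5 5 5 5 (resCount exList 25) (fun _ => 0)
      rfl rfl (by norm_num) (by norm_num) (by norm_num) (by norm_num) (by decide +kernel)
  · exact cyclotomic_dvd_of_counts _ exList_nodup 125 25 5 25 5 (resCount exList 125) (fun _ => 0)
      rfl rfl (by norm_num) (by norm_num) (by norm_num) (by norm_num) (by decide +kernel)
  · exact cyclotomic_dvd_of_counts _ exList_nodup 15 3 5 5 3
      (fun u => 22 + if u = 0 then 9 else 0) (fun v => if v = 0 then 25 else 0)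
      rfl rfl (by norm_num) (by norm_num) (by norm_num) (by norm_num) (by decide +kernel)

theorem min_le : MINs {9, 27, 25, 125, 15} ≤ 450 := by
  refine Nat.sInf_le ⟨exList.toFinset, ?_, ?_, ex_dvd⟩
  · rw [← Finset.card_pos, List.toFinset_card_of_nodup exList_nodup, exList_length]
    norm_num
  · rw [List.toFinset_card_of_nodup exList_nodup, exList_length]

/-! ### Fibered sets -/

theorem geom_mul (d p : ℕ) : (∑ i ∈ Finset.range (d * p), (X : ℤ[X]) ^ i)
    = (∑ i ∈ Finset.range d, X ^ i) * ∑ j ∈ Finset.range p, X ^ (j * d) := by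
  induction p with
  | zero => simp
  | succ p ih =>
    rw [Nat.mul_succ, Finset.sum_range_add, ih, Finset.sum_range_succ, mul_add]
    congr 1
    rw [Finset.sum_mul]
    refine Finset.sum_congr rfl fun i _ => ?_
    rw [mul_comm d p]; ring

theorem range_fibered (N p k : ℕ) (hp : p.Prime) (h : p ∣ N) :
    IsFibered (Finset.range (N * k)) N := by
  refine ⟨p, hp, h, ?_⟩
  have h1 : N = N / p * p := (Nat.div_mul_cancel h).symm
  unfold maskPoly fiberPoly
  rw [geom_mul]
  refine Dvd.dvd.mul_right ?_ _
  conv_rhs => rw [h1, geom_mul]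
  exact dvd_mul_left _ _

theorem fiberPoly_prime_pow (p n : ℕ) (hp : p.Prime) :
    fiberPoly (p ^ (n + 1)) p = cyclotomic (p ^ (n + 1)) ℤ := by
  rw [cyclotomic_prime_pow_eq_geom_sum hp, fiberPoly]
  refine Finset.sum_congr rfl fun j _ => ?_
  rw [pow_succ, Nat.mul_div_cancel _ hp.pos, mul_comm j, pow_mul]

theorem dvd_of_fibered_prime_pow (A : Finset ℕ) (p n : ℕ) (hp : p.Prime)
    (h : IsFibered A (p ^ (n + 1))) : cyclotomic (p ^ (n + 1)) ℤ ∣ maskPoly A := by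
  obtain ⟨r, hr, hd, h⟩ := h
  have : r = p := (Nat.prime_dvd_prime_iff_eq hr hp).1 (hr.dvd_of_dvd_pow hd)
  subst this
  rwa [fiberPoly_prime_pow r n hr] at h

theorem dvd_of_fibered_15 (A : Finset ℕ) (h : IsFibered A 15) :
    cyclotomic 3 ℤ ∣ maskPoly A ∨ cyclotomic 5 ℤ ∣ maskPoly A := by
  obtain ⟨r, hr, hd, h⟩ := h
  have hr' : r = 3 ∨ r = 5 := by
    rw [show 15 = 3 * 5 from rfl, hr.dvd_mul] at hd
    exact hd.imp (Nat.prime_dvd_prime_iff_eq hr Nat.prime_three).1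
      (Nat.prime_dvd_prime_iff_eq hr Nat.prime_five).1
  rcases hr' with rfl | rfl
  · left
    refine Dvd.dvd.trans ⟨X ^ 8 - X ^ 7 + X ^ 5 - X ^ 4 + X ^ 3 - X + 1, ?_⟩ h
    have : Fact (Nat.Prime 3) := ⟨Nat.prime_three⟩
    rw [cyclotomic_prime, fiberPoly]
    simp only [Finset.sum_range_succ, Finset.sum_range_zero]
    norm_num
    ring
  · right
    refine Dvd.dvd.trans ⟨X ^ 8 - X ^ 7 + X ^ 5 - X ^ 4 + X ^ 3 - X + 1, ?_⟩ h
    have : Fact (Nat.Prime 5) := ⟨Nat.prime_five⟩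
    rw [cyclotomic_prime, fiberPoly]
    simp only [Finset.sum_range_succ, Finset.sum_range_zero]
    norm_num
    ring

theorem prod_cyclotomic_dvd (T : Finset ℕ) (hT : ∀ t ∈ T, 0 < t) (P : ℤ[X])
    (h : ∀ t ∈ T, cyclotomic t ℤ ∣ P) : ∏ t ∈ T, cyclotomic t ℤ ∣ P := by
  refine Finset.prod_dvd_of_isRelPrime ?_ h
  intro a ha b hb hab
  refine ((cyclotomic.irreducible (hT a ha)).isRelPrime_iff_not_dvd).2 fun hd => hab ?_
  have := ((cyclotomic.irreducible (hT a ha)).associated_of_dvd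
    (cyclotomic.irreducible (hT b hb)) hd)
  exact cyclotomic_injective (eq_of_monic_of_associated (cyclotomic.monic a ℤ)
    (cyclotomic.monic b ℤ) this)

theorem eval_maskPoly (A : Finset ℕ) : (maskPoly A).eval 1 = A.card := by
  simp [maskPoly, eval_finsetSum]

theorem eval_cyc (p n : ℕ) (hp : p.Prime) : (cyclotomic (p ^ (n + 1)) ℤ).eval 1 = p := by
  have := Fact.mk hp
  exact eval_one_cyclotomic_prime_pow n

theorem card_ge (A : Finset ℕ) (hA : A.Nonempty)
    (h : ∀ s ∈ ({9, 27, 25, 125, 15} : Finset ℕ), IsFibered A s) : 675 ≤ A.card := by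
  have h9 := dvd_of_fibered_prime_pow A 3 1 Nat.prime_three (h 9 (by simp))
  have h27 := dvd_of_fibered_prime_pow A 3 2 Nat.prime_three (h 27 (by simp))
  have h25 := dvd_of_fibered_prime_pow A 5 1 Nat.prime_five (h 25 (by simp))
  have h125 := dvd_of_fibered_prime_pow A 5 2 Nat.prime_five (h 125 (by simp))
  have e9 := eval_cyc 3 1 Nat.prime_three
  have e27 := eval_cyc 3 2 Nat.prime_three
  have e25 := eval_cyc 5 1 Nat.prime_five
  have e125 := eval_cyc 5 2 Nat.prime_five
  have e5 := eval_cyc 5 0 Nat.prime_five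
  norm_num at h9 h27 h25 h125 e9 e27 e25 e125 e5
  have hpos := hA.card_pos
  rcases dvd_of_fibered_15 A (h 15 (by simp)) with h3 | h5
  · have := prod_cyclotomic_dvd {3, 9, 27, 25, 125} (by simp) (maskPoly A) (by
      simp only [Finset.forall_mem_insert, Finset.mem_singleton, forall_eq]
      exact ⟨h3, h9, h27, h25, h125⟩)
    have := eval_dvd (x := 1) this
    rw [eval_maskPoly, eval_prod] at this
    simp [e9, e27, e25, e125] at this
    omega
  · have := prod_cyclotomic_dvd {5, 9, 27, 25, 125} (by simp) (maskPoly A) (by simp [*])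
    have := eval_dvd (x := 1) this
    rw [eval_maskPoly, eval_prod] at this
    simp [e5, e9, e27, e25, e125] at this
    omega

theorem fib_ge : 675 ≤ FIBs {9, 27, 25, 125, 15} := by
  have hne : {k | ∃ A : Finset ℕ, A.Nonempty ∧ A.card = k ∧
      ∀ s ∈ ({9, 27, 25, 125, 15} : Finset ℕ), IsFibered A s}.Nonempty := by
    refine ⟨_, Finset.range 3375, ⟨0, by simp⟩, rfl, ?_⟩
    intro s hs
    simp only [Finset.mem_insert, Finset.mem_singleton] at hs
    rcases hs with rfl | rfl | rfl | rfl | rfl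
    · exact range_fibered 9 3 375 Nat.prime_three (by norm_num)
    · exact range_fibered 27 3 125 Nat.prime_three (by norm_num)
    · exact range_fibered 25 5 135 Nat.prime_five (by norm_num)
    · exact range_fibered 125 5 27 Nat.prime_five (by norm_num)
    · exact range_fibered 15 3 225 Nat.prime_three (by norm_num)
  obtain ⟨A, hA, hc, hf⟩ := Nat.sInf_mem hne
  unfold FIBs
  rw [← hc]
  exact card_ge A hA hf


/-- Theorem 1.4: there is a finite nonempty set `S` of integers `≥ 2` such that
`lcm(S)` has exactly two distinct prime factors and `MIN(S) < FIB(S)`. -/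
theorem exists_min_lt_fib_two_primes :
    ∃ S : Finset ℕ, S.Nonempty ∧ (∀ s ∈ S, 2 ≤ s) ∧
      (S.lcm id).primeFactors.card = 2 ∧ MINs S < FIBs S := by
  refine ⟨{9, 27, 25, 125, 15}, by simp, by simp, ?_,
    lt_of_le_of_lt min_le (lt_of_lt_of_le (by norm_num) fib_ge)⟩
  have h1 : ({9, 27, 25, 125, 15} : Finset ℕ).lcm id = 3 ^ 3 * 5 ^ 3 := by decide +kernel
  rw [h1, Nat.primeFactors_mul (by norm_num) (by norm_num),
    Nat.primeFactors_prime_pow (by norm_num) Nat.prime_three,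
    Nat.primeFactors_prime_pow (by norm_num) Nat.prime_five]
  rfl
end

section
/- There exist a natural number M with exactly two distinct prime divisors and a nonempty set A ⊆ ℤ_M such that A satisfies (T1) and A(X) has at least one unsupported cyclotomic divisor, i.e. there is an integer s ≥ 2 with Φ_s(X) ∣ A(X), every prime dividing s divides |A|, and Φ_{p^α}(X) ∤ A(X) for every prime power p^α (α ≥ 1) exactly dividing s. -/
open Polynomial

/-- Mask polynomial of a finite subset of `ZMod M`: `A(X) = ∑_{a ∈ A} X^{a.val}`. -/
noncomputable def zmaskPoly (M : ℕ) (A : Finset (ZMod M)) : Polynomial ℤ :=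
  ∑ a ∈ A, X ^ a.val

/-- `S_A^*`: the set of prime powers `p^α` (`α ≥ 1`) with `Φ_{p^α}(X) ∣ A(X)`. -/
def SAstar (M : ℕ) (A : Finset (ZMod M)) : Set ℕ :=
  {s | IsPrimePow s ∧ cyclotomic s ℤ ∣ zmaskPoly M A}

/-- Property (T1): `|A| = ∏_{s ∈ S_A^*} Φ_s(1)`. -/
def PropT1 (M : ℕ) (A : Finset (ZMod M)) : Prop :=
  (A.card : ℤ) = ∏ᶠ s ∈ SAstar M A, (cyclotomic s ℤ).eval 1

/-- `A` has an unsupported cyclotomic divisor: an `s ≥ 2` with `Φ_s ∣ A(X)`, every prime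
dividing `s` divides `|A|`, and `Φ_{p^α} ∤ A(X)` for every prime power `p^α ∥ s`. -/
def HasUnsupportedDivisor (M : ℕ) (A : Finset (ZMod M)) : Prop :=
  ∃ s : ℕ, 2 ≤ s ∧ cyclotomic s ℤ ∣ zmaskPoly M A ∧
    (∀ p : ℕ, p.Prime → p ∣ s → p ∣ A.card) ∧
    (∀ p α : ℕ, p.Prime → 1 ≤ α → p ^ α ∣ s → ¬ p ^ (α + 1) ∣ s →
      ¬ cyclotomic (p ^ α) ℤ ∣ zmaskPoly M A)

/-- The explicit example: 72 residues modulo 432. -/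
def listA : List ℕ :=
  [0, 6, 13, 14, 27, 28, 34, 42, 48, 56, 69, 70, 77, 84, 90, 92, 105, 112,
   120, 126, 133, 134, 147, 148, 155, 162, 168, 170, 183, 190, 198, 204, 211, 212, 225, 226,
   233, 240, 246, 248, 254, 261, 267, 268, 276, 282, 289, 290, 303, 304, 311, 318, 324, 326,
   332, 339, 345, 346, 354, 360, 367, 368, 381, 382, 388, 396, 402, 410, 417, 423, 424, 431]

def setA : Finset (ZMod 432) := listA.toFinset.image (fun n : ℕ => (n : ZMod 432))

theorem listA_lt : ∀ n ∈ listA, n < 432 := by decide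

theorem listA_nodup : listA.Nodup := by decide

theorem cast_inj_listA : Set.InjOn (fun n : ℕ => (n : ZMod 432)) (listA.toFinset : Set ℕ) := by
  intro a ha b hb h
  have ha' := listA_lt a (by simpa using ha)
  have hb' := listA_lt b (by simpa using hb)
  have h2 := congrArg ZMod.val h
  simpa [ZMod.val_natCast, Nat.mod_eq_of_lt ha', Nat.mod_eq_of_lt hb'] using h2

theorem card_setA : setA.card = 72 := by
  rw [setA, Finset.card_image_of_injOn cast_inj_listA, List.toFinset_card_of_nodup listA_nodup]
  rfl

theorem mask_setA : zmaskPoly 432 setA = (listA.map (fun n => (X : ℤ[X]) ^ n)).sum := by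
  rw [zmaskPoly, setA, Finset.sum_image cast_inj_listA, ← List.sum_toFinset _ listA_nodup]
  refine Finset.sum_congr rfl fun n hn => ?_
  have hn' := listA_lt n (by simpa using hn)
  rw [ZMod.val_natCast, Nat.mod_eq_of_lt hn']

theorem red_aux (m : ℕ) (L : List ℕ) :
    cyclotomic m ℤ ∣ (L.map (fun n => (X : ℤ[X]) ^ n)).sum -
      (L.map (fun n => (X : ℤ[X]) ^ (n % m))).sum := by
  induction L with
  | nil => simp
  | cons a L ih =>
    have h : cyclotomic m ℤ ∣ (X : ℤ[X]) ^ a - X ^ (a % m) := by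
      have h1 : cyclotomic m ℤ ∣ (X : ℤ[X]) ^ (m * (a / m)) - 1 := by
        refine (cyclotomic.dvd_X_pow_sub_one m ℤ).trans ?_
        rw [pow_mul]
        simpa using sub_dvd_pow_sub_pow ((X : ℤ[X]) ^ m) 1 (a / m)
      have h2 : (X : ℤ[X]) ^ a - X ^ (a % m) = X ^ (a % m) * (X ^ (m * (a / m)) - 1) := by
        conv_lhs => rw [← Nat.mod_add_div a m]
        simp only [Nat.add_mul_mod_self_left, Nat.mod_mod]
        ring
      rw [h2]
      exact h1.mul_left _
    simp only [List.map_cons, List.sum_cons]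
    have := dvd_add h ih
    convert this using 1
    ring

theorem dvd_of_red {m : ℕ}
    (h : cyclotomic m ℤ ∣ (listA.map (fun n => (X : ℤ[X]) ^ (n % m))).sum) :
    cyclotomic m ℤ ∣ zmaskPoly 432 setA := by
  rw [mask_setA]
  exact (dvd_iff_dvd_of_dvd_sub (red_aux m listA)).2 h

theorem cyc_4 : cyclotomic 4 ℤ = (1)*X^2 + (1)*X^0 := by
  rw [show 4 = 2^(1+1) by norm_num, cyclotomic_prime_pow_eq_geom_sum (by norm_num)]; simp [Finset.sum_range_succ]; try ring

theorem dvd_4 : cyclotomic 4 ℤ ∣ zmaskPoly 432 setA := by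
  apply dvd_of_red
  rw [cyc_4]
  refine ⟨(24)*X^0 + (12)*X^1, ?_⟩
  simp only [listA, List.map_cons, List.map_nil, List.sum_cons, List.sum_nil, Nat.reduceMod]
  ring

theorem cyc_8 : cyclotomic 8 ℤ = (1)*X^4 + (1)*X^0 := by
  rw [show 8 = 2^(2+1) by norm_num, cyclotomic_prime_pow_eq_geom_sum (by norm_num)]; simp [Finset.sum_range_succ]; try ring

theorem dvd_8 : cyclotomic 8 ℤ ∣ zmaskPoly 432 setA := by
  apply dvd_of_red
  rw [cyc_8]
  refine ⟨(12)*X^0 + (6)*X^1 + (12)*X^2 + (6)*X^3, ?_⟩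
  simp only [listA, List.map_cons, List.map_nil, List.sum_cons, List.sum_nil, Nat.reduceMod]
  ring

theorem cyc_16 : cyclotomic 16 ℤ = (1)*X^8 + (1)*X^0 := by
  rw [show 16 = 2^(3+1) by norm_num, cyclotomic_prime_pow_eq_geom_sum (by norm_num)]; simp [Finset.sum_range_succ]; try ring

theorem dvd_16 : cyclotomic 16 ℤ ∣ zmaskPoly 432 setA := by
  apply dvd_of_red
  rw [cyc_16]
  refine ⟨(6)*X^0 + (3)*X^1 + (6)*X^2 + (3)*X^3 + (6)*X^4 + (3)*X^5 + (6)*X^6 + (3)*X^7, ?_⟩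
  simp only [listA, List.map_cons, List.map_nil, List.sum_cons, List.sum_nil, Nat.reduceMod]
  ring

theorem cyc_9 : cyclotomic 9 ℤ = (1)*X^6 + (1)*X^3 + (1)*X^0 := by
  rw [show 9 = 3^(1+1) by norm_num, cyclotomic_prime_pow_eq_geom_sum (by norm_num)]; simp [Finset.sum_range_succ]; try ring

theorem dvd_9 : cyclotomic 9 ℤ ∣ zmaskPoly 432 setA := by
  apply dvd_of_red
  rw [cyc_9]
  refine ⟨(12)*X^0 + (6)*X^1 + (6)*X^2, ?_⟩
  simp only [listA, List.map_cons, List.map_nil, List.sum_cons, List.sum_nil, Nat.reduceMod]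
  ring

theorem cyc_27 : cyclotomic 27 ℤ = (1)*X^18 + (1)*X^9 + (1)*X^0 := by
  rw [show 27 = 3^(2+1) by norm_num, cyclotomic_prime_pow_eq_geom_sum (by norm_num)]; simp [Finset.sum_range_succ]; try ring

theorem dvd_27 : cyclotomic 27 ℤ ∣ zmaskPoly 432 setA := by
  apply dvd_of_red
  rw [cyc_27]
  refine ⟨(4)*X^0 + (2)*X^1 + (2)*X^2 + (4)*X^3 + (2)*X^4 + (2)*X^5 + (4)*X^6 + (2)*X^7 + (2)*X^8, ?_⟩
  simp only [listA, List.map_cons, List.map_nil, List.sum_cons, List.sum_nil, Nat.reduceMod]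
  ring

theorem cyc_6 : cyclotomic 6 ℤ = (1)*X^2 + (-1)*X^1 + (1)*X^0 := by
  rw [cyclotomic_six]; ring

theorem dvd_6 : cyclotomic 6 ℤ ∣ zmaskPoly 432 setA := by
  apply dvd_of_red
  rw [cyc_6]
  refine ⟨(22)*X^0 + (27)*X^1 + (18)*X^2 + (5)*X^3, ?_⟩
  simp only [listA, List.map_cons, List.map_nil, List.sum_cons, List.sum_nil, Nat.reduceMod]
  ring

theorem eval_mask : (zmaskPoly 432 setA).eval 1 = 72 := by
  rw [zmaskPoly, eval_finset_sum]
  simp [card_setA]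

theorem eval_pp (p k : ℕ) (hp : p.Prime) : (cyclotomic (p ^ (k + 1)) ℤ).eval 1 = p := by
  haveI := Fact.mk hp
  simp [eval_one_cyclotomic_prime_pow]

theorem prod_T : ∏ s ∈ ({4, 8, 16, 9, 27} : Finset ℕ), (cyclotomic s ℤ).eval 1 = 72 := by
  have h4 := eval_pp 2 1 Nat.prime_two
  have h8 := eval_pp 2 2 Nat.prime_two
  have h16 := eval_pp 2 3 Nat.prime_two
  have h9 := eval_pp 3 1 Nat.prime_three
  have h27 := eval_pp 3 2 Nat.prime_three
  norm_num at h4 h8 h16 h9 h27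
  rw [Finset.prod_insert (by decide), Finset.prod_insert (by decide),
    Finset.prod_insert (by decide), Finset.prod_insert (by decide), Finset.prod_singleton,
    h4, h8, h16, h9, h27]
  norm_num

theorem prod_dvd_mask (T : Finset ℕ) (h0 : ∀ t ∈ T, 0 < t)
    (h : ∀ t ∈ T, cyclotomic t ℤ ∣ zmaskPoly 432 setA) :
    ∏ t ∈ T, cyclotomic t ℤ ∣ zmaskPoly 432 setA := by
  refine Finset.prod_dvd_of_isRelPrime ?_ h
  intro a ha b hb hab
  have ia := cyclotomic.irreducible (h0 a ha)
  have ib := cyclotomic.irreducible (h0 b hb)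
  refine (ia.isRelPrime_iff_not_dvd).2 fun hd => hab ?_
  have := ia.associated_of_dvd ib hd
  exact cyclotomic_injective (eq_of_monic_of_associated (cyclotomic.monic a ℤ)
    (cyclotomic.monic b ℤ) this)

theorem T_dvd : ∀ t ∈ ({4, 8, 16, 9, 27} : Finset ℕ), cyclotomic t ℤ ∣ zmaskPoly 432 setA := by
  intro t ht
  simp only [Finset.mem_insert, Finset.mem_singleton] at ht
  rcases ht with rfl | rfl | rfl | rfl | rfl
  · exact dvd_4
  · exact dvd_8
  · exact dvd_16
  · exact dvd_9
  · exact dvd_27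

theorem SAstar_eq : SAstar 432 setA = (({4, 8, 16, 9, 27} : Finset ℕ) : Set ℕ) := by
  ext t
  constructor
  · rintro ⟨hpp, hd⟩
    by_contra hn
    have hn' : t ∉ ({4, 8, 16, 9, 27} : Finset ℕ) := hn
    have h1 := prod_dvd_mask (insert t {4, 8, 16, 9, 27}) (by
      intro x hx
      rcases Finset.mem_insert.1 hx with rfl | hx
      · exact hpp.pos
      · exact (by decide : ∀ y ∈ ({4, 8, 16, 9, 27} : Finset ℕ), 0 < y) x hx) (by
      intro x hx
      rcases Finset.mem_insert.1 hx with rfl | hx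
      · exact hd
      · exact T_dvd x hx)
    have h2 := eval_dvd (x := (1 : ℤ)) h1
    rw [eval_prod, Finset.prod_insert hn', prod_T, eval_mask] at h2
    obtain ⟨p, k, hp, hk, rfl⟩ := (isPrimePow_nat_iff _).1 hpp
    obtain ⟨j, rfl⟩ : ∃ j, k = j + 1 := ⟨k - 1, by omega⟩
    rw [eval_pp p j hp] at h2
    have h3 : p * 72 ∣ 72 := by exact_mod_cast h2
    have := Nat.le_of_dvd (by norm_num) h3
    have := hp.two_le
    omega
  · intro ht
    refine ⟨?_, T_dvd t ht⟩
    have ht' : t ∈ ({4, 8, 16, 9, 27} : Finset ℕ) := ht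
    simp only [Finset.mem_insert, Finset.mem_singleton] at ht'
    rw [isPrimePow_nat_iff]
    rcases ht' with rfl | rfl | rfl | rfl | rfl
    · exact ⟨2, 2, by norm_num⟩
    · exact ⟨2, 3, by norm_num⟩
    · exact ⟨2, 4, by norm_num⟩
    · exact ⟨3, 2, by norm_num⟩
    · exact ⟨3, 3, by norm_num⟩

/-- Theorem 1.8: there exist `M` with exactly two distinct prime divisors and a nonempty
`A ⊆ ℤ_M` satisfying (T1) with at least one unsupported cyclotomic divisor. -/
theorem exists_T1_unsupported_two_primes :
    ∃ (M : ℕ) (A : Finset (ZMod M)),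
      M.primeFactors.card = 2 ∧ A.Nonempty ∧ PropT1 M A ∧ HasUnsupportedDivisor M A := by
  refine ⟨432, setA, ?_, ?_, ?_, 6, by norm_num, dvd_6, ?_, ?_⟩
  · rw [show 432 = 2 ^ 4 * 3 ^ 3 by norm_num, Nat.primeFactors_mul (by norm_num) (by norm_num),
      Nat.primeFactors_prime_pow (by norm_num) Nat.prime_two,
      Nat.primeFactors_prime_pow (by norm_num) Nat.prime_three]
    rfl
  · rw [← Finset.card_pos, card_setA]; norm_num
  · rw [PropT1, SAstar_eq, finprod_mem_coe_finset, prod_T, card_setA]; rfl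
  · intro p _ h
    rw [card_setA]
    exact h.trans (by norm_num)
  · intro p α hp hα h6 _ hd
    have hmem : p ^ α ∈ SAstar 432 setA := ⟨hp.isPrimePow.pow (by omega), hd⟩
    rw [SAstar_eq] at hmem
    have hmem' : p ^ α ∈ ({4, 8, 16, 9, 27} : Finset ℕ) := hmem
    have key : ∀ t ∈ ({4, 8, 16, 9, 27} : Finset ℕ), ¬ t ∣ 6 := by decide
    exact key _ hmem' h6
end

section
/- Let M = ∏_{k=1}^{K} p_k^{n_k} with p_1, …, p_K distinct primes and n_k ≥ 1, and assume p_K > ⋯ > p_2 > p_1^{n_1}. Let S be a nonempty set of divisors of M, each at least 2, and let A : ℤ_M → ℕ be a multiset with positive total mass such that Φ_s(X) ∣ A(X) for all s ∈ S. Then |A| ≥ p_1^{E_1}, where E_1 = #{α ≥ 1 : ∃ s ∈ S with p_1^α ∥ s}. -/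
open Polynomial

/-- Mask polynomial of a multiset (weight function) on `ZMod M`:
`A(X) = ∑_{x ∈ ℤ_M} w(x) · X^{x.val}`. -/
noncomputable def wmaskPoly (M : ℕ) (w : ZMod M → ℕ) : Polynomial ℤ :=
  ∑ i ∈ Finset.range M, C ((w (i : ZMod M)) : ℤ) * X ^ i

/-- Total mass `|A| = ∑_x w(x)` of a multiset on `ZMod M`. -/
def wmass (M : ℕ) (w : ZMod M → ℕ) : ℕ :=
  ∑ i ∈ Finset.range M, w (i : ZMod M)

open Polynomial in
/-- If `Φ_{q^b N} ∣ A`, `q ∤ N`, and all values of `A` on the unit circle are `< q` in norm,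
then `Φ_N ∣ A`. -/
lemma step_aux (A : Polynomial ℤ) (q N b : ℕ) (K : Type) [Field K] [NumberField K]
    [IsCyclotomicExtension {N} ℚ K] (hq : q.Prime) (hN : ¬ q ∣ N) (hb : 0 < b)
    (hA : ∀ z : ℂ, ‖z‖ = 1 → ‖aeval z A‖ < q)
    (h : cyclotomic (q ^ b * N) ℤ ∣ A) : cyclotomic N ℤ ∣ A := by
  have : Fact q.Prime := ⟨hq⟩
  have hN0 : N ≠ 0 := by rintro rfl; simp at hN
  have : NeZero N := ⟨hN0⟩
  have hmon := cyclotomic.monic N ℤ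
  -- reduction mod q
  have h1 : cyclotomic N (ZMod q) ∣ A.map (Int.castRingHom (ZMod q)) := by
    have h2 := Polynomial.map_dvd (Int.castRingHom (ZMod q)) h
    rw [map_cyclotomic, cyclotomic_mul_prime_pow_eq (ZMod q) hN hb] at h2
    refine dvd_trans (dvd_pow_self _ ?_) h2
    have : q ^ (b - 1) < q ^ b := Nat.pow_lt_pow_right hq.one_lt (by omega)
    omega
  have h3 : (A %ₘ cyclotomic N ℤ).map (Int.castRingHom (ZMod q)) = 0 := by
    rw [map_modByMonic _ hmon, map_cyclotomic]
    exact (modByMonic_eq_zero_iff_dvd (cyclotomic.monic N _)).2 h1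
  have h4 : C (q : ℤ) ∣ A %ₘ cyclotomic N ℤ := by
    rw [C_dvd_iff_dvd_coeff]
    intro i
    have := congrArg (fun f => f.coeff i) h3
    simp only [coeff_map, coeff_zero] at this
    exact (ZMod.intCast_zmod_eq_zero_iff_dvd _ q).1 (by simpa using this)
  obtain ⟨B, hB⟩ := h4
  have hdec : C (q : ℤ) * B + cyclotomic N ℤ * (A /ₘ cyclotomic N ℤ) = A := by
    rw [← hB]; exact modByMonic_add_div A _
  classical
  have hζ : IsPrimitiveRoot (IsCyclotomicExtension.zeta N ℚ K) N :=
    IsCyclotomicExtension.zeta_spec N ℚ K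
  set ζ := IsCyclotomicExtension.zeta N ℚ K
  have hroot : aeval ζ (cyclotomic N ℤ) = 0 := by
    have := hζ.isRoot_cyclotomic (Nat.pos_of_ne_zero hN0)
    rw [IsRoot.def] at this
    rw [aeval_def, eval₂_eq_eval_map, map_cyclotomic]; exact this
  have hval : aeval ζ A = (q : K) * aeval ζ B := by
    conv_lhs => rw [← hdec]
    simp [hroot]
  have hint : IsIntegral ℤ (aeval ζ B) := by
    have hz : IsIntegral ℤ ζ := hζ.isIntegral (Nat.pos_of_ne_zero hN0)
    exact IsIntegral.of_mem_of_fg _ hz.fg_adjoin_singleton _ (aeval_mem_adjoin_singleton ℤ ζ)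
  have hq0 : (0 : ℝ) < q := by exact_mod_cast hq.pos
  have hemb : ∀ σ : K →ₐ[ℚ] ℂ, ‖σ (aeval ζ B)‖ < 1 := by
    intro σ
    have e1 : σ (aeval ζ A) = aeval (σ ζ) A := by
      exact (aeval_algHom_apply (σ.restrictScalars ℤ) ζ A).symm
    have e2 : ‖σ ζ‖ = 1 := (hζ.map_of_injective σ.injective).norm'_eq_one hN0
    have e3 := hA _ e2
    rw [← e1, hval, map_mul, norm_mul, map_natCast] at e3
    rw [Complex.norm_natCast] at e3
    by_contra hc
    push Not at hc
    nlinarith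
  have hnorm : Algebra.norm ℚ (aeval ζ B) = 0 := by
    obtain ⟨k, hk⟩ := IsIntegrallyClosed.isIntegral_iff.1 (Algebra.isIntegral_norm ℚ hint)
    have e := Algebra.norm_eq_prod_embeddings ℚ ℂ (aeval ζ B)
    have e4 : ‖∏ σ : K →ₐ[ℚ] ℂ, σ (aeval ζ B)‖ < 1 := by
      rw [norm_prod]
      by_contra hc
      have hne : (Finset.univ : Finset (K →ₐ[ℚ] ℂ)).Nonempty :=
        Finset.univ_nonempty_iff.2 ⟨IsAlgClosed.lift⟩
      obtain ⟨σ, hσ⟩ := hne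
      have : ∏ σ : K →ₐ[ℚ] ℂ, ‖σ (aeval ζ B)‖ < 1 := by
        rw [← Finset.mul_prod_erase _ _ hσ]
        have : ∏ τ ∈ Finset.univ.erase σ, ‖τ (aeval ζ B)‖ ≤ 1 :=
          Finset.prod_le_one (fun _ _ => norm_nonneg _) (fun τ _ => (hemb τ).le)
        calc _ ≤ ‖σ (aeval ζ B)‖ * 1 := by gcongr
          _ < 1 := by simpa using hemb σ
      exact hc this
    rw [← e, ← hk] at e4
    have e5 : |(k : ℝ)| < 1 := by simpa using e4
    have e6 : |k| < 1 := by exact_mod_cast e5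
    rw [Int.abs_lt_one_iff] at e6
    rw [← hk, e6]; simp
  have hB0 : aeval ζ B = 0 := Algebra.norm_eq_zero_iff.1 hnorm
  rw [cyclotomic_eq_minpoly hζ (Nat.pos_of_ne_zero hN0)]
  refine minpoly.isIntegrallyClosed_dvd (hζ.isIntegral (Nat.pos_of_ne_zero hN0)) ?_
  rw [hval, hB0, mul_zero]

open Polynomial in
lemma descend_aux (A : Polynomial ℤ) (m : ℕ) (hA : ∀ z : ℂ, ‖z‖ = 1 → ‖aeval z A‖ ≤ m)
    (P : ℕ) (t : ℕ) : t ≠ 0 → (∀ q, q.Prime → q ∣ t → m < q ∧ ¬ q ∣ P) →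
    cyclotomic (t * P) ℤ ∣ A → cyclotomic P ℤ ∣ A := by
  induction t using Nat.strong_induction_on with
  | _ t ih =>
    intro ht hq h
    by_cases h1 : t = 1
    · simpa [h1] using h
    have hpr := Nat.minFac_prime h1
    obtain ⟨b, t', hnd, he⟩ := Nat.exists_eq_pow_mul_and_not_dvd ht t.minFac hpr.ne_one
    set q := t.minFac with hqdef
    have hqt : q ∣ t := Nat.minFac_dvd t
    have hb : 0 < b := by
      rcases Nat.eq_zero_or_pos b with rfl | hb
      · exfalso; apply hnd; rw [pow_zero, one_mul] at he; rw [← he]; exact hqt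
      · exact hb
    have ht' : t' ≠ 0 := by rintro rfl; simp at hnd
    have hlt : t' < t := by
      rw [he]
      have := Nat.one_lt_pow hb.ne' hpr.one_lt
      nlinarith [Nat.pos_of_ne_zero ht']
    refine ih t' hlt ht' (fun r hr hrt => hq r hr (hrt.trans ⟨q ^ b, by rw [mul_comm]; exact he⟩)) ?_
    have hP0 : P ≠ 0 := by rintro rfl; exact (hq q hpr hqt).2 (dvd_zero q)
    have : NeZero (t' * P) := ⟨mul_ne_zero ht' hP0⟩
    have : NeZero (((t' * P : ℕ)) : ℚ) := ⟨by exact_mod_cast mul_ne_zero ht' hP0⟩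
    have : IsCyclotomicExtension {t' * P} ℚ (CyclotomicField (t' * P) ℚ) :=
      CyclotomicField.isCyclotomicExtension _ _
    refine step_aux A q (t' * P) b (CyclotomicField (t' * P) ℚ) hpr ?_ hb ?_ ?_
    · rw [hpr.dvd_mul]; exact not_or.2 ⟨hnd, (hq q hpr hqt).2⟩
    · intro z hz
      exact (hA z hz).trans_lt (by exact_mod_cast (hq q hpr hqt).1)
    · rw [← mul_assoc, ← he]; exact h

lemma wmask_norm_le (M : ℕ) (w : ZMod M → ℕ) (z : ℂ) (hz : ‖z‖ = 1) :
    ‖Polynomial.aeval z (wmaskPoly M w)‖ ≤ (wmass M w : ℝ) := by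
  unfold wmaskPoly wmass
  rw [map_sum]
  refine (norm_sum_le _ _).trans ?_
  push_cast
  refine Finset.sum_le_sum fun i _ => ?_
  simp [hz]

lemma wmask_eval_one (M : ℕ) (w : ZMod M → ℕ) :
    Polynomial.eval 1 (wmaskPoly M w) = (wmass M w : ℤ) := by
  simp [wmaskPoly, wmass, Polynomial.eval_finsetSum]

open Polynomial in
lemma prod_aux (A : Polynomial ℤ) (p : ℕ) (hp : p.Prime) (T : Finset ℕ)
    (hT : ∀ a ∈ T, 1 ≤ a ∧ cyclotomic (p ^ a) ℤ ∣ A) : (p : ℤ) ^ T.card ∣ eval 1 A := by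
  have : Fact p.Prime := ⟨hp⟩
  have h : ∏ a ∈ T, cyclotomic (p ^ a) ℤ ∣ A := by
    refine Finset.prod_dvd_of_isRelPrime ?_ (fun a ha => (hT a ha).2)
    intro a _ b _ hab
    have ia := cyclotomic.irreducible (pow_pos hp.pos a)
    have ib := cyclotomic.irreducible (pow_pos hp.pos b)
    refine (ia.isRelPrime_iff_not_dvd).2 fun hd => hab ?_
    have := eq_of_monic_of_associated (cyclotomic.monic _ ℤ) (cyclotomic.monic _ ℤ)
      (ia.associated_of_dvd ib hd)
    exact Nat.pow_right_injective hp.two_le (cyclotomic_injective this)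
  have h2 := eval_dvd (x := (1 : ℤ)) h
  rw [eval_prod, Finset.prod_congr rfl (g := fun _ => (p : ℤ)), Finset.prod_const] at h2
  · exact h2
  · intro a ha
    obtain ⟨k, rfl⟩ := Nat.exists_eq_add_of_le' (hT a ha).1
    exact eval_one_cyclotomic_prime_pow k

/-- Theorem 7.8: if `M = ∏ p_i^{n_i}` with `p_K > ⋯ > p_2 > p_1^{n_1}`, `S` a nonempty set
of divisors of `M` (each `≥ 2`), and `Φ_s ∣ A(X)` for all `s ∈ S`, then `|A| ≥ p_1^{E_1}`,
where `E_1 = #{α ≥ 1 : ∃ s ∈ S, p_1^α ∥ s}`. -/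
theorem mass_ge_of_growth_condition (K : ℕ) (hK : 0 < K) (p n : Fin K → ℕ)
    (hp : ∀ i, (p i).Prime) (hn : ∀ i, 1 ≤ n i) (hinj : Function.Injective p)
    (M : ℕ) (hM : M = ∏ i, p i ^ n i)
    (hchain : ∀ i j : Fin K, 1 ≤ (i : ℕ) → i < j → p i < p j)
    (hgap : ∀ i : Fin K, 1 ≤ (i : ℕ) → p ⟨0, hK⟩ ^ n ⟨0, hK⟩ < p i)
    (S : Finset ℕ) (hS : S.Nonempty) (hSdvd : ∀ s ∈ S, s ∣ M ∧ 2 ≤ s)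
    (w : ZMod M → ℕ) (hw : 0 < wmass M w)
    (hdvd : ∀ s ∈ S, cyclotomic s ℤ ∣ wmaskPoly M w) :
    p ⟨0, hK⟩ ^ (Set.ncard {α : ℕ | 1 ≤ α ∧
        ∃ s ∈ S, p ⟨0, hK⟩ ^ α ∣ s ∧ ¬ p ⟨0, hK⟩ ^ (α + 1) ∣ s}) ≤ wmass M w := by
  set P := p ⟨0, hK⟩ with hP
  have hPp : P.Prime := hp _
  set T : Set ℕ := {α : ℕ | 1 ≤ α ∧ ∃ s ∈ S, P ^ α ∣ s ∧ ¬ P ^ (α + 1) ∣ s} with hTdef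
  have hsplit : M = P ^ n ⟨0, hK⟩ * ∏ i ∈ Finset.univ.erase ⟨0, hK⟩, p i ^ n i := by
    rw [hM, ← Finset.mul_prod_erase _ _ (Finset.mem_univ (⟨0, hK⟩ : Fin K))]
  have hcop : Nat.Coprime P (∏ i ∈ Finset.univ.erase ⟨0, hK⟩, p i ^ n i) := by
    refine Nat.Coprime.prod_right fun i hi => Nat.Coprime.pow_right _ ?_
    refine (Nat.coprime_primes hPp (hp i)).2 fun h => ?_
    exact (Finset.ne_of_mem_erase hi) (hinj h).symm
  have hTsub : T ⊆ ↑(Finset.Icc 1 (n ⟨0, hK⟩)) := by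
    rintro α ⟨h1, s, hs, hd, _⟩
    rw [Finset.coe_Icc]
    refine ⟨h1, ?_⟩
    have h2 : P ^ α ∣ M := hd.trans (hSdvd s hs).1
    rw [hsplit] at h2
    exact (Nat.pow_dvd_pow_iff_le_right hPp.one_lt).1 ((hcop.pow_left α).dvd_of_dvd_mul_right h2)
  have hTfin : T.Finite := (Finset.finite_toSet _).subset hTsub
  have hcard : T.ncard ≤ n ⟨0, hK⟩ := by
    have := Set.ncard_le_ncard hTsub (Finset.finite_toSet _)
    rw [Set.ncard_coe_finset] at this
    simpa using this
  by_contra hlt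
  push Not at hlt
  have hlt2 : wmass M w < P ^ n ⟨0, hK⟩ :=
    hlt.trans_le (Nat.pow_le_pow_right hPp.pos hcard)
  have key : ∀ a ∈ hTfin.toFinset, 1 ≤ a ∧ cyclotomic (P ^ a) ℤ ∣ wmaskPoly M w := by
    intro a ha
    rw [Set.Finite.mem_toFinset] at ha
    obtain ⟨h1, s, hs, ⟨t, ht⟩, hnd⟩ := ha
    refine ⟨h1, ?_⟩
    have hs2 := (hSdvd s hs).2
    have hPt : ¬ P ∣ t := by
      rintro ⟨u, rfl⟩
      exact hnd ⟨u, by rw [ht]; ring⟩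
    refine descend_aux _ (wmass M w) (wmask_norm_le M w) (P ^ a) t ?_ ?_ ?_
    · rintro rfl; simp at hPt
    · intro q hq hqt
      have hqP : q ≠ P := by rintro rfl; exact hPt hqt
      have hqM : q ∣ ∏ i, p i ^ n i := by
        rw [← hM]
        exact (hqt.trans ⟨P ^ a, by rw [ht, mul_comm]⟩).trans (hSdvd s hs).1
      obtain ⟨i, _, hi⟩ := (Prime.dvd_finsetProd_iff hq.prime _).1 hqM
      have hqi : q = p i := (Nat.prime_dvd_prime_iff_eq hq (hp i)).1 (hq.dvd_of_dvd_pow hi)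
      have hi0 : 1 ≤ (i : ℕ) := by
        rcases Nat.eq_zero_or_pos (i : ℕ) with h0 | h0
        · exfalso; apply hqP; rw [hqi, hP]; congr 1; exact Fin.ext h0
        · exact h0
      refine ⟨?_, fun hd => hqP ?_⟩
      · rw [hqi]; exact hlt2.trans (hgap i hi0)
      · exact (Nat.prime_dvd_prime_iff_eq hq hPp).1 (hq.dvd_of_dvd_pow hd)
    · rw [mul_comm, ← ht]; exact hdvd s hs
  have hfin := prod_aux _ P hPp _ key
  rw [wmask_eval_one, ← Set.ncard_eq_toFinset_card T hTfin] at hfin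
  have hfin2 : P ^ T.ncard ∣ wmass M w := by exact_mod_cast hfin
  exact absurd (Nat.le_of_dvd hw hfin2) (not_le.2 hlt)
end

section
/- Let p, q be distinct odd primes. Let k ≥ 1 satisfy 2^k ≥ pq + 1; let a, b ≥ 1 satisfy p^a ≡ 1 (mod 4^k) and q^b ≡ 1 (mod 4^k) and p^a > q^b; and let n > a and m > b satisfy p^{n-1} q^{m-1} ≥ p^a q^{2b}. Then there exists a set A ⊆ ℤ_{p^n q^m} with |A| = p^a q^b such that Φ_{p^j}(X) ∣ A(X) for all 1 ≤ j ≤ a, Φ_{q^j}(X) ∣ A(X) for all 1 ≤ j ≤ b, and Φ_{p^n q^m}(X) ∣ A(X). -/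
open Polynomial

lemma matrix_core (t w v : ℕ) (ht : 1 ≤ t) :
    ∃ F : (Option ((Fin (t+1) × Fin (t+1)) ⊕ (Fin v × Fin (t+1) × Fin (t+1))) ⊕ (Fin w × Fin (t+1) × Fin (t+1))) →
      (Option ((Fin (t+1) × Fin (t+1)) ⊕ (Fin v × Fin (t+1) × Fin (t+1)))) → ℕ,
      (∀ i, ∑ j, F i j = 1 + (t+1)*(t+1)*(v+1)) ∧
      (∀ j, ∑ i, F i j = 1 + (t+1)*(t+1)*(v+1) + (t+1)*(t+1)*w) ∧
      (∀ i j, F i j = 0 ∨ t ≤ F i j) := by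
  classical
  refine ⟨fun i j => match i, j with
    | .inl c, c' => if c = c' then 1 + (t+1)*(t+1)*(v+1) else 0
    | .inr (_, _, r), none => if r = 0 then t+1 else 0
    | .inr (_, h, r), some (.inl (h', s)) => if h' = h then
        (if r = 0 then (if s = 0 then t+1 else t) else (if s = r then t+2 else t+1)) else 0
    | .inr (_, h, r), some (.inr (_, h', s)) => if (h', s) = (h, r) then (t+1)*(t+1) else 0, ?_, ?_, ?_⟩
  · rintro (c | ⟨g, h, r⟩)
    · simp
    · have h1 : ∑ s : Fin (t+1), (if r = 0 then (if s = 0 then t+1 else t) else (if s = r then t+2 else t+1))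
          + (if r = 0 then t+1 else 0) = 1 + (t+1)*(t+1) := by
        by_cases hr : r = 0
        · subst hr
          simp [Fin.sum_univ_succ]; ring
        · have : ∀ s : Fin (t+1), (if s = r then t+2 else t+1) = (t+1) + (if s = r then 1 else 0) := by
            intro s; split_ifs <;> rfl
          simp only [hr, if_false, this, Finset.sum_add_distrib]
          simp; ring
      have h2 : ∑ x : Fin (t+1) × Fin (t+1), (if x.1 = h then
        (if r = 0 then (if x.2 = 0 then t+1 else t) else (if x.2 = r then t+2 else t+1)) else 0) = 
        ∑ s : Fin (t+1), (if r = 0 then (if s = 0 then t+1 else t) else (if s = r then t+2 else t+1)) := by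
        rw [Fintype.sum_prod_type, Finset.sum_comm]
        simp
      rw [Fintype.sum_option, Fintype.sum_sum_type, Fintype.sum_prod_type (γ := ℕ) (α₁ := Fin v)]
      simp only [Prod.mk.eta, Finset.sum_ite_eq', Finset.mem_univ, if_true, h2]
      simp only [Finset.sum_const, Finset.card_univ, Fintype.card_fin, smul_eq_mul]
      rw [← add_assoc, add_comm (ite _ _ _), h1]; ring
  · intro j
    rw [Fintype.sum_sum_type]
    simp only [Finset.sum_ite_eq', Finset.mem_univ, if_true]
    congr 1
    rcases j with _ | ⟨h', s⟩ | ⟨g', h', s⟩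
    · simp [Fintype.sum_prod_type]; ring
    · have h1 : ∑ r : Fin (t+1), (if r = 0 then (if s = 0 then t+1 else t) else (if s = r then t+2 else t+1))
          = (t+1)*(t+1) := by
        by_cases hs : s = 0
        · subst hs
          rw [Fin.sum_univ_succ]
          have : ∀ i : Fin t, (0 : Fin (t+1)) ≠ i.succ := fun i => (Fin.succ_ne_zero i).symm
          simp [Fin.succ_ne_zero, this]; ring
        · obtain ⟨s, rfl⟩ := Fin.exists_succ_eq.mpr hs
          rw [Fin.sum_univ_succ]
          have : ∀ r : Fin t, (if s = r then t+2 else t+1) = (t+1) + (if s = r then 1 else 0) := by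
            intro s; split_ifs <;> rfl
          simp [Fin.succ_ne_zero, this, Finset.sum_add_distrib]; ring
      simp only [Fintype.sum_prod_type]
      have : ∀ x : Fin w, ∑ h : Fin (t+1), ∑ r : Fin (t+1), (if h' = h then
        (if r = 0 then (if s = 0 then t+1 else t) else (if s = r then t+2 else t+1)) else 0) = (t+1)*(t+1) := by
        intro x
        rw [Finset.sum_comm, ← h1]; simp
      refine (Finset.sum_congr rfl (fun x _ => this x)).trans ?_
      simp; ring
    · rw [Fintype.sum_prod_type (γ := ℕ) (α₁ := Fin w)]
      simp only [Prod.mk.eta, Finset.sum_ite_eq, Finset.mem_univ, if_true]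
      simp; ring
  · rintro (c | ⟨g, h, r⟩) (_ | ⟨h', s⟩ | ⟨g', h', s⟩) <;> dsimp only <;> split_ifs <;>
      first
      | (left; rfl)
      | (right; nlinarith [Nat.zero_le (t*t), Nat.zero_le v, Nat.zero_le ((t+1)*(t+1)*v)])

lemma matrix_ex (N w v R C : ℕ) (hN : 2 ≤ N) (hC : C = 1 + N*N*(v+1)) (hR : R = C + N*N*w) :
    ∃ F : Fin R → Fin C → ℕ, (∀ i, ∑ j, F i j = C) ∧ (∀ j, ∑ i, F i j = R) ∧
      (∀ i j, F i j = 0 ∨ N - 1 ≤ F i j) := by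
  obtain ⟨t, rfl⟩ : ∃ t, N = t + 1 := ⟨N - 1, by omega⟩
  obtain ⟨F, h1, h2, h3⟩ := matrix_core t w v (by omega)
  let eC : Fin C ≃ Option ((Fin (t+1) × Fin (t+1)) ⊕ (Fin v × Fin (t+1) × Fin (t+1))) :=
    Fintype.equivOfCardEq (by simp [hC]; ring)
  let eR : Fin R ≃ (Option ((Fin (t+1) × Fin (t+1)) ⊕ (Fin v × Fin (t+1) × Fin (t+1))) ⊕ (Fin w × Fin (t+1) × Fin (t+1))) :=
    Fintype.equivOfCardEq (by simp [hC, hR]; ring)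
  refine ⟨fun i j => F (eR i) (eC j), fun i => ?_, fun j => ?_, fun i j => by simpa using h3 _ _⟩
  · rw [eC.sum_comp (fun j => F (eR i) j), h1, hC]
  · rw [eR.sum_comp (fun i => F i (eC j)), h2, hR, hC]

lemma cyc_dvd (s : ℕ) (hs : 0 < s) (P : ℤ[X]) 
    (h : ∀ ζ : ℂ, IsPrimitiveRoot ζ s → aeval ζ P = 0) : cyclotomic s ℤ ∣ P := by
  have hz := Complex.isPrimitiveRoot_exp s hs.ne'
  rw [cyclotomic_eq_minpoly hz hs]
  exact minpoly.isIntegrallyClosed_dvd (hz.isIntegral hs) (h _ hz)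

lemma sum_ite_lt (x y s t K : ℕ) (h : s + t ≤ K) : 
    ∑ l ∈ Finset.range K, (if l < s then x else if l < s + t then y else 0) = s * x + t * y := by
  obtain ⟨r, rfl⟩ := Nat.exists_eq_add_of_le h
  rw [Finset.sum_range_add, Finset.sum_range_add]
  rw [Finset.sum_eq_zero (s := Finset.range r), add_zero]
  · congr 1
    · rw [Finset.sum_congr rfl (g := fun _ => x)]
      · simp
      · intro l hl; simp at hl; simp [hl]
    · rw [Finset.sum_congr rfl (g := fun _ => y)]
      · simp
      · intro l hl; simp at hl; simp [hl]
  · intro l hl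
    rw [if_neg (by omega), if_neg (by omega)]

lemma fibers (p q s t K : ℕ) (hp : 1 < p) (hq : 1 < q) (h : s + t ≤ K) :
    ∃ Z : ℕ → Finset ℕ, (∀ l, ∀ z ∈ Z l, z < p * q) ∧ 
      (∑ l ∈ Finset.range K, (Z l).card = s * p + t * q) ∧
      ∀ ω : ℂ, IsPrimitiveRoot ω (p * q) → ∀ l, ∑ z ∈ Z l, ω ^ z = 0 := by
  have ip : Function.Injective (fun x => p * x) := fun x y h => Nat.eq_of_mul_eq_mul_left (by omega) h
  have iq : Function.Injective (fun x => q * x) := fun x y h => Nat.eq_of_mul_eq_mul_left (by omega) h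
  refine ⟨fun l => if l < s then (Finset.range p).image (fun x => q * x) else 
    if l < s + t then (Finset.range q).image (fun x => p * x) else ∅, ?_, ?_, ?_⟩
  · intro l z hz
    dsimp only at hz
    split_ifs at hz
    · simp only [Finset.mem_image, Finset.mem_range] at hz
      obtain ⟨x, hx, rfl⟩ := hz
      nlinarith
    · simp only [Finset.mem_image, Finset.mem_range] at hz
      obtain ⟨x, hx, rfl⟩ := hz
      nlinarith
    · simp at hz
  · rw [← sum_ite_lt p q s t K h]
    refine Finset.sum_congr rfl fun l _ => ?_
    dsimp only
    split_ifs
    · rw [Finset.card_image_of_injective _ iq, Finset.card_range]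
    · rw [Finset.card_image_of_injective _ ip, Finset.card_range]
    · rfl
  · intro ω hω l
    dsimp only
    split_ifs
    · rw [Finset.sum_image (iq.injOn)]
      simp only [pow_mul]
      exact (hω.pow (by positivity) (mul_comm p q)).geom_sum_eq_zero hp
    · rw [Finset.sum_image (ip.injOn)]
      simp only [pow_mul]
      exact (hω.pow (by positivity) rfl).geom_sum_eq_zero hq
    · simp

lemma chars (p q a b n m : ℕ) (hp : p.Prime) (hq : q.Prime) (hpq : p ≠ q)
    (K : ℕ) (hn : a < n) (hm : b < m)
    (hK : p ^ (n - 1) * q ^ (m - 1) = p ^ a * q ^ b * K)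
    (Z : Fin (p ^ a) → Fin (q ^ b) → ℕ → Finset ℕ)
    (hZ : ∀ i j l, ∀ z ∈ Z i j l, z < p * q) :
    ∃ (d : Fin (p ^ a) → Fin (q ^ b) → ℕ) (A : Finset (ZMod (p ^ n * q ^ m))),
      (∀ i j, d i j ≡ i [MOD p ^ a] ∧ d i j ≡ j [MOD q ^ b]) ∧
      A.card = ∑ i, ∑ j, ∑ l ∈ Finset.range K, (Z i j l).card ∧
      ∀ ζ : ℂ, aeval ζ (zmaskPoly (p ^ n * q ^ m) A) =
        ∑ i, ∑ j, ∑ l ∈ Finset.range K, ∑ z ∈ Z i j l,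
          ζ ^ (d i j + p ^ a * q ^ b * l + p ^ (n - 1) * q ^ (m - 1) * z) := by
  classical
  have hp0 : p ^ a ≠ 0 := pow_ne_zero _ hp.ne_zero
  have hq0 : q ^ b ≠ 0 := pow_ne_zero _ hq.ne_zero
  have co : (p ^ a).Coprime (q ^ b) := Nat.Coprime.pow _ _ ((Nat.coprime_primes hp hq).2 hpq)
  have hM : p ^ n * q ^ m = p ^ (n - 1) * q ^ (m - 1) * (p * q) := by
    obtain ⟨n, rfl⟩ : ∃ n', n = n' + 1 := ⟨n - 1, by omega⟩
    obtain ⟨m, rfl⟩ : ∃ m', m = m' + 1 := ⟨m - 1, by omega⟩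
    simp [pow_succ]; ring
  have : NeZero (p ^ n * q ^ m) :=
    ⟨mul_ne_zero (pow_ne_zero _ hp.ne_zero) (pow_ne_zero _ hq.ne_zero)⟩
  let d : Fin (p ^ a) → Fin (q ^ b) → ℕ := fun i j => (Nat.chineseRemainder co i j : ℕ)
  have hd1 : ∀ i j, d i j ≡ i [MOD p ^ a] ∧ d i j ≡ j [MOD q ^ b] :=
    fun i j => (Nat.chineseRemainder co i j).2
  have hd2 : ∀ i j, d i j < p ^ a * q ^ b := fun i j => Nat.chineseRemainder_lt_mul co _ _ hp0 hq0
  set D := p ^ a * q ^ b with hD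
  set L := p ^ (n - 1) * q ^ (m - 1) with hL
  let T : Finset (Σ _ : (Fin (p ^ a) × Fin (q ^ b)) × ℕ, ℕ) :=
    ((Finset.univ : Finset (Fin (p ^ a) × Fin (q ^ b))) ×ˢ Finset.range K).sigma
      (fun c => Z c.1.1 c.1.2 c.2)
  let g : (Σ _ : (Fin (p ^ a) × Fin (q ^ b)) × ℕ, ℕ) → ℕ :=
    fun x => d x.1.1.1 x.1.1.2 + D * x.1.2 + L * x.2
  have hlow : ∀ x ∈ T, d x.1.1.1 x.1.1.2 + D * x.1.2 < L := by
    rintro ⟨⟨⟨i, j⟩, l⟩, z⟩ hx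
    simp only [T, Finset.mem_sigma, Finset.mem_product, Finset.mem_univ, true_and,
      Finset.mem_range] at hx
    have := hd2 i j
    dsimp only
    rw [hK]
    calc d i j + D * l < D * (l + 1) := by rw [mul_add]; omega
      _ ≤ D * K := Nat.mul_le_mul_left _ hx.1
  have hlt : ∀ x ∈ T, g x < p ^ n * q ^ m := by
    intro x hx
    have h1 := hlow x hx
    have h2 : x.2 < p * q := by
      simp only [T, Finset.mem_sigma] at hx
      exact hZ _ _ _ _ hx.2
    rw [hM]
    calc g x < L * (x.2 + 1) := by simp only [g]; rw [mul_add]; omega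
      _ ≤ L * (p * q) := Nat.mul_le_mul_left _ h2
  have hinj : Set.InjOn g T := by
    rintro ⟨⟨⟨i, j⟩, l⟩, z⟩ hx ⟨⟨⟨i', j'⟩, l'⟩, z'⟩ hx' h
    have h1 := hlow _ hx
    have h1' := hlow _ hx'
    simp only [g] at h h1 h1'
    have hLp : 0 < L := by omega
    have hDp : 0 < D := by have := hd2 i j; omega
    have e1 : z = z' := by
      have := congrArg (· / L) h
      simpa [Nat.add_mul_div_left _ _ hLp, Nat.div_eq_of_lt h1, Nat.div_eq_of_lt h1'] using this
    subst e1
    have h := Nat.add_right_cancel h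
    have e2 : l = l' := by
      have := congrArg (· / D) h
      simpa [Nat.add_mul_div_left _ _ hDp, Nat.div_eq_of_lt (hd2 _ _)] using this
    subst e2
    have h := Nat.add_right_cancel h
    have e3 : i = i' := by
      have := ((hd1 i j).1.symm.trans (h ▸ (hd1 i' j').1))
      exact Fin.ext (Nat.ModEq.eq_of_lt_of_lt this i.2 i'.2)
    have e4 : j = j' := by
      have := ((hd1 i j).2.symm.trans (h ▸ (hd1 i' j').2))
      exact Fin.ext (Nat.ModEq.eq_of_lt_of_lt this j.2 j'.2)
    subst e3 e4; rfl
  have hinj2 : Set.InjOn (fun x => (g x : ZMod (p ^ n * q ^ m))) T := by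
    intro x hx y hy h
    apply hinj hx hy
    have := congrArg ZMod.val h
    simpa only [ZMod.val_cast_of_lt (hlt x hx), ZMod.val_cast_of_lt (hlt y hy)] using this
  refine ⟨d, T.image (fun x => (g x : ZMod (p ^ n * q ^ m))), hd1, ?_, ?_⟩
  · rw [Finset.card_image_of_injOn hinj2, Finset.card_sigma, Finset.sum_product,
      Fintype.sum_prod_type]
  · intro ζ
    rw [zmaskPoly, map_sum, Finset.sum_image hinj2]
    rw [Finset.sum_congr rfl (g := fun x => ζ ^ (g x))]
    · rw [Finset.sum_sigma, Finset.sum_product, Fintype.sum_prod_type]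
    · intro x hx
      rw [ZMod.val_cast_of_lt (hlt x hx)]
      simp

lemma pow_modEq_c (ζ : ℂ) (r x y : ℕ) (h : ζ ^ r = 1) (hxy : x ≡ y [MOD r]) : ζ ^ x = ζ ^ y := by
  rw [← Nat.mod_add_div x r, ← Nat.mod_add_div y r, hxy, pow_add, pow_add, pow_mul, pow_mul, h]
  simp

/-- Theorem 7.17 (general example for two odd primes): under the stated numerical
conditions on `k, a, b, n, m`, there is a set `A ⊆ ℤ_{p^n q^m}` with `|A| = p^a q^b`
divisible by `Φ_{p^j}` for `1 ≤ j ≤ a`, by `Φ_{q^j}` for `1 ≤ j ≤ b`, and by `Φ_{p^n q^m}`. -/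
theorem exists_general_example_odd_primes (p q : ℕ) (hp : p.Prime) (hq : q.Prime)
    (hpq : p ≠ q) (hpodd : Odd p) (hqodd : Odd q)
    (k a b n m : ℕ) (hk : 1 ≤ k) (h2k : p * q + 1 ≤ 2 ^ k)
    (ha : 1 ≤ a) (hb : 1 ≤ b)
    (hpa : p ^ a ≡ 1 [MOD 4 ^ k]) (hqb : q ^ b ≡ 1 [MOD 4 ^ k])
    (hab : q ^ b < p ^ a) (hn : a < n) (hm : b < m)
    (hsize : p ^ a * q ^ (2 * b) ≤ p ^ (n - 1) * q ^ (m - 1)) :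
    ∃ A : Finset (ZMod (p ^ n * q ^ m)),
      A.card = p ^ a * q ^ b ∧
      (∀ j : ℕ, 1 ≤ j → j ≤ a → cyclotomic (p ^ j) ℤ ∣ zmaskPoly (p ^ n * q ^ m) A) ∧
      (∀ j : ℕ, 1 ≤ j → j ≤ b → cyclotomic (q ^ j) ℤ ∣ zmaskPoly (p ^ n * q ^ m) A) ∧
      cyclotomic (p ^ n * q ^ m) ℤ ∣ zmaskPoly (p ^ n * q ^ m) A := by
  classical
  have h4 : 4 ^ k = 2 ^ k * 2 ^ k := by rw [← mul_pow]; norm_num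
  have hN : 2 ≤ 2 ^ k := Nat.le_self_pow (by omega) 2
  have hq1 : 1 < q ^ b := Nat.one_lt_pow (by omega) hq.one_lt
  obtain ⟨v, hv⟩ : ∃ v, q ^ b = 1 + 2 ^ k * 2 ^ k * (v + 1) := by
    obtain ⟨v, hv⟩ := (Nat.modEq_iff_dvd' hq1.le).1 hqb.symm
    rw [h4] at hv
    rcases v with _ | v
    · omega
    · exact ⟨v, by omega⟩
  obtain ⟨w, hw⟩ : ∃ w, p ^ a = q ^ b + 2 ^ k * 2 ^ k * w := by
    obtain ⟨w, hw⟩ := (Nat.modEq_iff_dvd' hab.le).1 (hqb.trans hpa.symm)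
    rw [h4] at hw
    exact ⟨w, by omega⟩
  obtain ⟨F, hF1, hF2, hF3⟩ := matrix_ex (2 ^ k) w v (p ^ a) (q ^ b) hN hv hw
  obtain ⟨K, hK⟩ : p ^ a * q ^ b ∣ p ^ (n - 1) * q ^ (m - 1) :=
    mul_dvd_mul (pow_dvd_pow _ (by omega)) (pow_dvd_pow _ (by omega))
  have hKq : q ^ b ≤ K := by
    rw [hK, two_mul, pow_add, ← mul_assoc] at hsize
    exact Nat.le_of_mul_le_mul_left hsize
      (Nat.mul_pos (pow_pos hp.pos _) (pow_pos hq.pos _))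
  have hrep : ∀ i j, ∃ s t, s * p + t * q = F i j := by
    intro i j
    rcases hF3 i j with h | h
    · exact ⟨0, 0, by simp [h]⟩
    · refine Nat.exists_add_mul_eq_of_gcd_dvd_of_mul_pred_le p q (F i j) ?_ ?_
      · rw [(Nat.coprime_primes hp hq).2 hpq]; exact one_dvd _
      · have : p.pred * q.pred ≤ p * q := Nat.mul_le_mul (Nat.pred_le _) (Nat.pred_le _)
        simp only [Nat.pred_eq_sub_one] at this ⊢
        omega
  have hZex : ∀ i j, ∃ Z : ℕ → Finset ℕ, (∀ l, ∀ z ∈ Z l, z < p * q) ∧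
      (∑ l ∈ Finset.range K, (Z l).card = F i j) ∧
      ∀ ω : ℂ, IsPrimitiveRoot ω (p * q) → ∀ l, ∑ z ∈ Z l, ω ^ z = 0 := by
    intro i j
    obtain ⟨s, t, h⟩ := hrep i j
    rw [← h]
    apply fibers p q s t K hp.one_lt hq.one_lt
    have h1 : F i j ≤ q ^ b := by
      rw [← hF1 i]; exact Finset.single_le_sum (f := F i) (fun _ _ => Nat.zero_le _) (Finset.mem_univ j)
    have h2 := Nat.le_mul_of_pos_right s hp.pos
    have h3 := Nat.le_mul_of_pos_right t hq.pos
    omega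
  choose Z hZ1 hZ2 hZ3 using hZex
  obtain ⟨d, A, hd, hA, hz⟩ := chars p q a b n m hp hq hpq K hn hm hK Z hZ1
  have hsmall : ∀ ζ : ℂ, ζ ^ (p ^ a * q ^ b) = 1 →
      aeval ζ (zmaskPoly (p ^ n * q ^ m) A) = ∑ i, ∑ j, ζ ^ (d i j) * (F i j : ℂ) := by
    intro ζ h
    rw [hz]
    refine Finset.sum_congr rfl fun i _ => Finset.sum_congr rfl fun j _ => ?_
    rw [← hZ2 i j]
    have : ∀ l z, ζ ^ (d i j + p ^ a * q ^ b * l + p ^ (n - 1) * q ^ (m - 1) * z) = ζ ^ (d i j) := by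
      intro l z
      rw [hK, pow_add, pow_add, mul_assoc _ K z, pow_mul ζ _ l, pow_mul ζ _ (K * z), h]; simp
    simp only [this, Finset.sum_const, nsmul_eq_mul, ← Finset.sum_mul, Nat.cast_sum]
    rw [mul_comm]
  refine ⟨A, ?_, ?_, ?_, ?_⟩
  · rw [hA]; simp only [hZ2, hF1]; simp
  · intro j hj1 hj2
    refine cyc_dvd _ (pow_pos hp.pos _) _ fun ζ hζ => ?_
    have e : ζ ^ (p ^ a) = 1 := (hζ.pow_eq_one_iff_dvd _).2 (pow_dvd_pow _ hj2)
    rw [hsmall ζ (by rw [pow_mul, e, one_pow])]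
    simp only [fun i j => pow_modEq_c ζ _ _ _ e (hd i j).1, ← Finset.mul_sum, ← Nat.cast_sum, hF1,
      ← Finset.sum_mul]
    rw [Fin.sum_univ_eq_sum_range (fun i => ζ ^ i)]
    have := mul_neg_geom_sum ζ (p ^ a)
    rw [e, sub_self] at this
    rcases mul_eq_zero.1 this with h | h
    · exact absurd (sub_eq_zero.1 h).symm (hζ.ne_one (Nat.one_lt_pow (by omega) hp.one_lt))
    · rw [h, zero_mul]
  · intro j hj1 hj2
    refine cyc_dvd _ (pow_pos hq.pos _) _ fun ζ hζ => ?_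
    have e : ζ ^ (q ^ b) = 1 := (hζ.pow_eq_one_iff_dvd _).2 (pow_dvd_pow _ hj2)
    rw [hsmall ζ (by rw [mul_comm, pow_mul, e, one_pow]), Finset.sum_comm]
    simp only [fun i j => pow_modEq_c ζ _ _ _ e (hd i j).2, ← Finset.mul_sum, ← Nat.cast_sum, hF2,
      ← Finset.sum_mul]
    rw [Fin.sum_univ_eq_sum_range (fun i => ζ ^ i)]
    have := mul_neg_geom_sum ζ (q ^ b)
    rw [e, sub_self] at this
    rcases mul_eq_zero.1 this with h | h
    · exact absurd (sub_eq_zero.1 h).symm (hζ.ne_one (Nat.one_lt_pow (by omega) hq.one_lt))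
    · rw [h, zero_mul]
  · have hMpos : 0 < p ^ n * q ^ m := Nat.mul_pos (pow_pos hp.pos _) (pow_pos hq.pos _)
    refine cyc_dvd _ hMpos _ fun ζ hζ => ?_
    have hM : p ^ n * q ^ m = p ^ (n - 1) * q ^ (m - 1) * (p * q) := by
      obtain ⟨n, rfl⟩ : ∃ n', n = n' + 1 := ⟨n - 1, by omega⟩
      obtain ⟨m, rfl⟩ : ∃ m', m = m' + 1 := ⟨m - 1, by omega⟩
      simp [pow_succ]; ring
    have hω := hζ.pow hMpos hM
    rw [hz]
    refine Finset.sum_eq_zero fun i _ => Finset.sum_eq_zero fun j _ =>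
      Finset.sum_eq_zero fun l _ => ?_
    have := hZ3 i j _ hω l
    simp only [pow_add, pow_mul ζ (p ^ (n - 1) * q ^ (m - 1)), ← Finset.mul_sum, this, mul_zero]
end
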